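/- For every ε > 0 and every edge-probability function p = p(n) satisfying n·p(n) − ln n − ln ln n → ∞ as n → ∞, with high probability a graph G sampled from G(n,p), with degree sequence d, is d̃(np/100, ε)-resilient with respect to Hamiltonicity. That is, w.h.p. for every spanning subgraph H ⊆ G such that d_H(v) ≤ d_G(v) − 2 for every vertex v with d_G(v) < np/100, and d_H(v) ≤ (1/3 − ε)·d_G(v) for every other vertex v, the graph G − H contains a Hamilton cycle. -/

import Mathlib

open Filter Finset SimpleGraph
open scoped Classical

/-- The probability weight of a particular graph `G` on `[n]` under `G(n,p)`. -/
noncomputable def gnpWeight (n : ℕ) (p : ℝ) (G : SimpleGraph (Fin n)) : ℝ :=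
  p ^ G.edgeFinset.card * (1 - p) ^ (n.choose 2 - G.edgeFinset.card)

/-- The probability that a random graph `G ~ G(n,p)` satisfies the predicate `A`. -/
noncomputable def gnpProb (n : ℕ) (p : ℝ) (A : SimpleGraph (Fin n) → Prop) : ℝ :=
  ∑ G : SimpleGraph (Fin n), if A G then gnpWeight n p G else 0

/-- A sequence of graph properties holds with high probability in `G(n, p n)`. -/
def WHP (p : ℕ → ℝ) (A : ∀ n : ℕ, SimpleGraph (Fin n) → Prop) : Prop :=
  Tendsto (fun n => gnpProb n (p n) (A n)) atTop (nhds 1)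

/-- Number of edges of a graph. -/
noncomputable def edgeCount {V : Type*} [Fintype V] (G : SimpleGraph V) : ℕ :=
  G.edgeFinset.card

/-- Number of edges with both endpoints in `U`. -/
noncomputable def eIn {V : Type*} [Fintype V] (G : SimpleGraph V) (U : Finset V) : ℕ :=
  (G.edgeFinset.filter (fun e => ∀ v ∈ e, v ∈ U)).card

/-- Number of edges with one endpoint in `U` and the other in `Z` (for disjoint `U`, `Z`). -/
noncomputable def eBetween {V : Type*} [Fintype V] (G : SimpleGraph V) (U Z : Finset V) : ℕ :=
  ((U ×ˢ Z).filter (fun q => G.Adj q.1 q.2)).card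

/-- External neighbourhood of a vertex set. -/
noncomputable def extNbhd {V : Type*} [Fintype V] (G : SimpleGraph V) (U : Finset V) : Finset V :=
  Finset.univ.filter (fun v => v ∉ U ∧ ∃ u ∈ U, G.Adj u v)

/-- `G` is an `(R, f)`-expander: every set `U` with `|U| ≤ R` satisfies `|N(U)| ≥ f(|U|)·|U|`. -/
def IsExpander {V : Type*} [Fintype V] (G : SimpleGraph V) (R : ℝ) (f : ℕ → ℝ) : Prop :=
  ∀ U : Finset V, U.Nonempty → (U.card : ℝ) ≤ R →
    f U.card * U.card ≤ ((extNbhd G U).card : ℝ)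

/-- The expansion function `f_β` on `{1, …, ⌊β n₁⌋}`. -/
noncomputable def fBeta (β : ℝ) (n1 : ℕ) (t : ℕ) : ℝ :=
  if t = Nat.floor (β * n1) then 2 * (1 + 39 * β) / (3 * β)
  else if (t : ℝ) < (n1 : ℝ) ^ (0.1 : ℝ) then Real.log n1 ^ (0.8 : ℝ)
  else 11

/-- `G₁` is `(n₁, d, β)`-quasi-random. -/
def QuasiRandom {V : Type*} [Fintype V] (G1 : SimpleGraph V) (n1 : ℕ) (d β : ℝ) : Prop :=
  (∀ v : V, d / 150 ≤ (G1.degree v : ℝ)) ∧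
  (∀ U : Finset V, (U.card : ℝ) < (n1 : ℝ) ^ (0.11 : ℝ) * Real.log n1 →
    (eIn G1 U : ℝ) ≤ d ^ (0.13 : ℝ) * U.card) ∧
  (∀ U : Finset V, (U.card : ℝ) < 12 * β * n1 →
    (eIn G1 U : ℝ) ≤ 50 * β * d * U.card) ∧
  (∀ U Z : Finset V, Disjoint U Z → U.card = Nat.floor (β * n1) →
    Z.card = Nat.floor ((1 / 3 - 27 * β) * n1) →
    (n1 : ℝ) * Real.log (Real.log n1) ≤ (eBetween G1 U Z : ℝ))

/-- Longest path length in `G`. -/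
noncomputable def longestPath {V : Type*} [Fintype V] (G : SimpleGraph V) : ℕ :=
  sSup {l : ℕ | ∃ (u v : V) (q : G.Walk u v), q.IsPath ∧ q.length = l}

/-- `{u, v}` is a booster with respect to `Γ`. -/
def IsBooster {V : Type*} [Fintype V] (Γ : SimpleGraph V) (u v : V) : Prop :=
  u ≠ v ∧ ¬ Γ.Adj u v ∧
    ((Γ ⊔ fromEdgeSet {s(u, v)}).IsHamiltonian ∨
      longestPath Γ < longestPath (Γ ⊔ fromEdgeSet {s(u, v)}))

/-- The booster set `B_Γ(v)`. -/
noncomputable def boosterSet {V : Type*} [Fintype V] (Γ : SimpleGraph V) (v : V) : Finset V :=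
  Finset.univ.filter (fun w => IsBooster Γ v w)

/-- Membership in the family `𝓛(n, β)` with witnessing partition `V = V₁ ∪ D`. -/
def InFamilyL (n : ℕ) (β : ℝ) (G : SimpleGraph (Fin n)) (V1 D : Finset (Fin n)) : Prop :=
  Disjoint V1 D ∧ V1 ∪ D = Finset.univ ∧
  ((D.card : ℝ) ≤ (n : ℝ) ^ (0.09 : ℝ)) ∧
  (∀ u ∈ D, 2 ≤ (G.neighborFinset u ∩ V1).card) ∧
  (∀ u ∈ D, ∀ v ∈ D, ∀ q : G.Walk u v, q.IsPath → 0 < q.length →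
    2 * Real.log n / (3 * Real.log (Real.log n)) < (q.length : ℝ)) ∧
  (∀ u ∈ D, ∀ q : G.Walk u u, q.IsCycle →
    2 * Real.log n / (3 * Real.log (Real.log n)) < (q.length : ℝ)) ∧
  IsExpander (G.induce (V1 : Set (Fin n))) (β * V1.card) (fBeta β V1.card)

/-- The set `D_t(G)` of vertices of degree less than `t`. -/
noncomputable def lowDegSet (n : ℕ) (t : ℝ) (G : SimpleGraph (Fin n)) : Finset (Fin n) :=
  Finset.univ.filter (fun v => (G.degree v : ℝ) < t)

/-!
Write `F = G \ H` and `d = n p`. Typically `G` has concentrated degree sums over linear sets, edges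
between any two linear sets, few edges inside small sets, and pairwise distant vertices of degree
below `d / 100`. Then `F` contains a skeleton `Γ₀` with at most a small multiple of `d n` edges,
made of a few edges at every vertex and a greedily chosen set of edges meeting every pair of large
sets, such that every graph between `Γ₀` and `F` expands small sets. Adding at most `n` further
edges of `F` to lengthen the longest path, we reach a sparse `Γ` with `Γ₀ ≤ Γ ≤ F` whose longest
path cannot be improved. If `F` is not Hamiltonian, Pósa rotations give quadratically many pairs of
vertices, determined by `Γ` alone, whose joining edge would close a longest path, and none of these
pairs is an edge of `F`. So every edge of `G` among them lies in `H`. Since `Γ` is sparse, a union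
bound over all such `Γ` shows that `G` has almost `p` times as many edges among these pairs as there
are pairs, which is more than the degree bounds on `H` allow.
-/

section Lists

variable {α : Type*} {l s t : List α} {a b c : α}

theorem pair_infix_reverse : [a, b] <:+: l.reverse ↔ [b, a] <:+: l :=
  List.reverse_infix (l₁ := [b, a])

theorem pair_infix_right_unique (hl : l.Nodup) (hb : [a, b] <:+: l) (hc : [a, c] <:+: l) :
    b = c := by
  obtain ⟨s, t, rfl⟩ := hb
  obtain ⟨s', t', h⟩ := hc
  simp only [List.append_assoc, List.cons_append, List.nil_append] at hl h
  obtain ⟨-, hat, hdisj⟩ := List.nodup_append.1 hl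
  have has : a ∉ s := fun ha => hdisj a ha a List.mem_cons_self rfl
  have hsplit := (List.append_cons_inj_of_notMem has (List.nodup_cons.1 hat).1).1 h.symm
  exact (List.cons.inj hsplit.2.2).1

theorem pair_infix_left_unique (hl : l.Nodup) (ha : [a, c] <:+: l) (hb : [b, c] <:+: l) :
    a = b :=
  pair_infix_right_unique (List.nodup_reverse.2 hl) (pair_infix_reverse.2 ha)
    (pair_infix_reverse.2 hb)

theorem not_pair_infix_of_head? (hl : l.Nodup) (hb : l.head? = some b) : ¬ [a, b] <:+: l := by
  rintro ⟨s, t, rfl⟩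
  cases s <;> simp only [List.nil_append, List.cons_append, List.head?_cons, Option.some.injEq]
    at hb <;> subst hb <;> simp at hl

theorem exists_eq_append_cons_cons (ha : l.head? = some a) (hb : b ∈ l) (hab : b ≠ a) :
    ∃ s y t, l = s ++ y :: b :: t := by
  obtain ⟨s, t, rfl⟩ := List.append_of_mem hb
  rcases s.eq_nil_or_concat with rfl | ⟨s, y, rfl⟩
  · exact absurd (Option.some.inj ha) hab
  · exact ⟨s, y, t, by simp⟩

theorem pair_infix_append (h : [a, b] <:+: s ++ t) :
    [a, b] <:+: s ∨ [a, b] <:+: t ∨ s.getLast? = some a ∧ t.head? = some b := by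
  rcases List.infix_append_iff_ne_nil.1 h with h | h | ⟨l₁, l₂, h₁, h₂, heq, hs, ht⟩
  · exact .inl h
  · exact .inr (.inl h)
  · obtain ⟨x, l₁, rfl⟩ := List.exists_cons_of_ne_nil h₁
    obtain ⟨y, l₂, rfl⟩ := List.exists_cons_of_ne_nil h₂
    obtain ⟨rfl, rfl, rfl, rfl⟩ : l₁ = [] ∧ a = x ∧ b = y ∧ l₂ = [] := by
      cases l₁ <;> simp_all
    obtain ⟨s, rfl⟩ := hs
    obtain ⟨t, rfl⟩ := ht
    simp

/-- `a` and `b` are neighbours on the path that visits the entries of `l` in order. -/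
def Consecutive (l : List α) (a b : α) : Prop := [a, b] <:+: l ∨ [b, a] <:+: l

theorem Consecutive.symm (h : Consecutive l a b) : Consecutive l b a := Or.symm h

theorem consecutive_append (h : Consecutive (s ++ t) a b) :
    Consecutive s a b ∨ Consecutive t a b ∨ (s.getLast? = some a ∧ t.head? = some b) ∨
      (s.getLast? = some b ∧ t.head? = some a) := by
  rcases h with h | h <;> rcases pair_infix_append h with h | h | h <;>
    simp only [Consecutive, h, true_or, or_true, and_self]

theorem consecutive_reverse : Consecutive l.reverse a b ↔ Consecutive l a b := by
  rw [Consecutive, Consecutive, pair_infix_reverse, pair_infix_reverse, or_comm]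

theorem Consecutive.append_right (h : Consecutive s a b) : Consecutive (s ++ t) a b :=
  h.imp List.infix_append_of_infix_left List.infix_append_of_infix_left

theorem Consecutive.append_left (h : Consecutive t a b) : Consecutive (s ++ t) a b :=
  h.imp List.infix_append_of_infix_right List.infix_append_of_infix_right

/-- The image of a finite set under a relation. -/
noncomputable def relImage [Fintype α] (R : α → α → Prop) (X : Finset α) : Finset α :=
  {w | ∃ x ∈ X, R x w}

theorem mem_relImage [Fintype α] {R : α → α → Prop} {X : Finset α} {w : α} :
    w ∈ relImage R X ↔ ∃ x ∈ X, R x w := by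
  simp [relImage]

theorem relImage_mono [Fintype α] {R : α → α → Prop} {X Y : Finset α} (h : X ⊆ Y) :
    relImage R X ⊆ relImage R Y :=
  fun _ hw => let ⟨x, hx, hxw⟩ := mem_relImage.1 hw; mem_relImage.2 ⟨x, h hx, hxw⟩

theorem card_relImage_le [Fintype α] {R : α → α → Prop} (X : Finset α)
    (hR : ∀ x w w', R x w → R x w' → w = w') : #(relImage R X) ≤ #X := by
  have hpre : ∀ w ∈ relImage R X, ∃ x ∈ X, R x w := fun w => mem_relImage.1
  choose! f hfX hf using hpre
  refine card_le_card_of_injOn f hfX fun w hw w' hw' hww' => hR _ _ _ (hf w hw) ?_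
  rw [hww']
  exact hf w' hw'

theorem relImage_consecutive (X : Finset α) [Fintype α] : relImage (Consecutive l) X =
    relImage (fun x w => [x, w] <:+: l) X ∪ relImage (fun x w => [w, x] <:+: l) X := by
  ext w
  simp only [mem_relImage, Consecutive, mem_union, and_or_left, exists_or]

theorem card_relImage_succ_le [Fintype α] (hl : l.Nodup) (X : Finset α) :
    #(relImage (fun x w => [x, w] <:+: l) X) ≤ #X :=
  card_relImage_le X fun _ _ _ hw hw' => pair_infix_right_unique hl hw hw'

theorem card_relImage_pred_le [Fintype α] (hl : l.Nodup) (X : Finset α) :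
    #(relImage (fun x w => [w, x] <:+: l) X) ≤ #X :=
  card_relImage_le X fun _ _ _ hw hw' => pair_infix_left_unique hl hw hw'

theorem card_relImage_consecutive_le [Fintype α] (hl : l.Nodup) (X : Finset α) :
    #(relImage (Consecutive l) X) ≤ 2 * #X := by
  rw [relImage_consecutive, two_mul]
  exact (card_union_le _ _).trans
    (add_le_add (card_relImage_succ_le hl X) (card_relImage_pred_le hl X))

theorem card_relImage_consecutive_lt [Fintype α] (hl : l.Nodup) {X : Finset α}
    (ha : l.head? = some a) (haX : a ∈ X) : #(relImage (Consecutive l) X) < 2 * #X := by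
  have hpred : relImage (fun x w => [w, x] <:+: l) X ⊆
      relImage (fun x w => [w, x] <:+: l) (X.erase a) := fun w hw => by
    obtain ⟨x, hx, hwx⟩ := mem_relImage.1 hw
    exact mem_relImage.2
      ⟨x, mem_erase.2 ⟨fun h => not_pair_infix_of_head? hl (h ▸ ha) hwx, hx⟩, hwx⟩
  rw [relImage_consecutive]
  calc _ ≤ _ := card_union_le _ _
    _ ≤ #X + #(X.erase a) := add_le_add (card_relImage_succ_le hl X)
      ((card_le_card hpred).trans (card_relImage_pred_le hl _))
    _ < 2 * #X := by linarith [card_erase_lt_of_mem haX]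

end Lists

section Rotations

variable {V : Type*} {G : SimpleGraph V} {l l₀ s t : List V} {u v w y : V}

/-- `l` lists the vertices of a path of `G` in order. Lists make the rotations of a path easier to
write down than `SimpleGraph.Walk`s do; the empty list is allowed. -/
def IsPathList (G : SimpleGraph V) (l : List V) : Prop := l.IsChain G.Adj ∧ l.Nodup

/-- `l` lists the vertices of a longest path of `G`. -/
def IsLongestPathList (G : SimpleGraph V) (l : List V) : Prop :=
  IsPathList G l ∧ ∀ l', IsPathList G l' → l'.length ≤ l.length

theorem IsPathList.mono {G' : SimpleGraph V} (h : G ≤ G') (hl : IsPathList G l) :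
    IsPathList G' l :=
  ⟨hl.1.imp fun _ _ hab => h hab, hl.2⟩

theorem IsPathList.reverse (hl : IsPathList G l) : IsPathList G l.reverse :=
  ⟨List.isChain_reverse.2 (hl.1.imp fun _ _ h => h.symm), List.nodup_reverse.2 hl.2⟩

theorem IsPathList.cons (hl : IsPathList G l) (hu : l.head? = some u) (huw : G.Adj u w)
    (hw : w ∉ l) : IsPathList G (w :: l) :=
  ⟨List.isChain_cons.2 ⟨fun _ hy => Option.some.inj (hu.symm.trans hy) ▸ huw.symm, hl.1⟩,
    List.nodup_cons.2 ⟨hw, hl.2⟩⟩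

theorem IsPathList.rotate (hl : IsPathList G (s ++ w :: t)) (hu : s.head? = some u)
    (huw : G.Adj u w) : IsPathList G (s.reverse ++ w :: t) := by
  refine ⟨?_, ((s.reverse_perm.append_right _).nodup_iff).2 hl.2⟩
  obtain ⟨hs, ht, -⟩ := List.isChain_append.1 hl.1
  refine List.isChain_append.2 ⟨List.isChain_reverse.2 (hs.imp fun _ _ h => h.symm), ht, ?_⟩
  intro a ha b hb
  rw [List.getLast?_reverse, hu, Option.mem_some_iff] at ha
  rw [List.head?_cons, Option.mem_some_iff] at hb
  exact ha ▸ hb ▸ huw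

theorem IsPathList.rotate_cyclic (hl : IsPathList G (s ++ w :: t))
    (hu : (s ++ w :: t).head? = some u) (hv : (s ++ w :: t).getLast? = some v)
    (hvu : G.Adj v u) : IsPathList G (w :: t ++ s) := by
  obtain ⟨hs, ht, -⟩ := List.isChain_append.1 hl.1
  refine ⟨List.isChain_append.2 ⟨ht, hs, fun a ha b hb => ?_⟩,
    (List.perm_append_comm.nodup_iff).1 hl.2⟩
  have hav : a = v := by
    rwa [List.getLast?_append, ha, Option.some_or, Option.some.injEq] at hv
  have hbu : b = u := by
    rwa [List.head?_append, hb, Option.some_or, Option.some.injEq] at hu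
  exact hav ▸ hbu ▸ hvu

theorem IsLongestPathList.reverse (hl : IsLongestPathList G l) : IsLongestPathList G l.reverse :=
  ⟨hl.1.reverse, fun l' hl' => l.length_reverse ▸ hl.2 l' hl'⟩

theorem IsLongestPathList.of_perm (hl₀ : IsLongestPathList G l₀) (hl : IsPathList G l)
    (hperm : l.Perm l₀) : IsLongestPathList G l :=
  ⟨hl, fun l' hl' => hperm.length_eq ▸ hl₀.2 l' hl'⟩

theorem IsLongestPathList.mem_of_adj_head (hl : IsLongestPathList G l) (hu : l.head? = some u)
    (huw : G.Adj u w) : w ∈ l := by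
  by_contra hw
  exact (hl.2 _ (hl.1.cons hu huw hw)).not_gt (Nat.lt_succ_self _)

variable [Fintype V]

/-- `endSet G v` is the set of first vertices of the longest paths of `G` that end at `v`. -/
noncomputable def endSet (G : SimpleGraph V) (v : V) : Finset V :=
  {u | ∃ l, IsLongestPathList G l ∧ l.head? = some u ∧ l.getLast? = some v}

theorem mem_endSet : u ∈ endSet G v ↔
    ∃ l, IsLongestPathList G l ∧ l.head? = some u ∧ l.getLast? = some v := by
  simp [endSet]

theorem mem_endSet_comm : u ∈ endSet G v ↔ v ∈ endSet G u := by
  suffices h : ∀ u v, u ∈ endSet G v → v ∈ endSet G u from ⟨h u v, h v u⟩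
  intro u v huv
  obtain ⟨l, hl, hu, hv⟩ := mem_endSet.1 huv
  exact mem_endSet.2 ⟨l.reverse, hl.reverse, by rwa [List.head?_reverse],
    by rwa [List.getLast?_reverse]⟩

theorem mem_extNbhd {U : Finset V} : w ∈ extNbhd G U ↔ w ∉ U ∧ ∃ u ∈ U, G.Adj u w := by
  simp [extNbhd]

/-- Pósa rotations: some path from `u`, with the vertices and the last vertex of `l₀`, is obtained
from `l₀` by rotations whose endpoints lie in `U`. The last clause records what such rotations
leave intact: a vertex that is neither in `U` nor next to `U` on `l₀` acquires no new neighbour on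
the path. -/
def IsRotationEnd (G : SimpleGraph V) (l₀ : List V) (U : Finset V) (u : V) : Prop :=
  ∃ l, IsPathList G l ∧ l.Perm l₀ ∧ l.head? = some u ∧ l.getLast? = l₀.getLast? ∧
    ∀ x z, x ∉ U → x ∉ relImage (Consecutive l₀) U → Consecutive l x z → Consecutive l₀ x z

theorem IsRotationEnd.mono {U U' : Finset V} (hU : U ⊆ U') (h : IsRotationEnd G l₀ U u) :
    IsRotationEnd G l₀ U' u := by
  obtain ⟨l, hl, hperm, hu, hlast, hkeep⟩ := h
  exact ⟨l, hl, hperm, hu, hlast, fun x z hxU hxN =>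
    hkeep x z (fun hx => hxU (hU hx)) fun hx => hxN (relImage_mono hU hx)⟩

theorem IsRotationEnd.mem_endSet {U : Finset V} (hl₀ : IsLongestPathList G l₀)
    (hv : l₀.getLast? = some v) (h : IsRotationEnd G l₀ U u) : u ∈ endSet G v := by
  obtain ⟨l, hl, hperm, hu, hlast, -⟩ := h
  exact _root_.mem_endSet.2 ⟨l, hl₀.of_perm hl hperm, hu, hlast.trans hv⟩

theorem IsRotationEnd.exists_of_adj {U : Finset V} (hl₀ : IsLongestPathList G l₀) (hu : u ∈ U)
    (hrot : IsRotationEnd G l₀ U u) (huw : G.Adj u w) (hwU : w ∉ U)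
    (hwN : w ∉ relImage (Consecutive l₀) U) :
    ∃ y ∉ U, Consecutive l₀ y w ∧ IsRotationEnd G l₀ (insert y U) y := by
  obtain ⟨l, hl, hperm, hhead, hlast, hkeep⟩ := hrot
  have hwl : w ∈ l := (hl₀.of_perm hl hperm).mem_of_adj_head hhead huw
  obtain ⟨s, y, t, rfl⟩ := exists_eq_append_cons_cons hhead hwl (fun h => hwU (h ▸ hu))
  have hyw : Consecutive l₀ y w := (hkeep w y hwU hwN (.inr ⟨s, t, by simp⟩)).symm
  have hyU : y ∉ U := fun hy => hwN (mem_relImage.2 ⟨y, hy, hyw⟩)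
  have hassoc : s ++ y :: w :: t = (s ++ [y]) ++ w :: t := by simp
  have hhead' : (s ++ [y]).head? = some u := by
    cases s with
    | nil => exact hhead
    | cons a s => exact hhead
  rw [hassoc] at hl hperm hlast hkeep
  refine ⟨y, hyU, hyw, (s ++ [y]).reverse ++ w :: t, hl.rotate hhead' huw,
    ((List.reverse_perm _).append_right _).trans hperm, by simp, ?_, ?_⟩
  · rw [← hlast, List.getLast?_append_of_ne_nil _ (List.cons_ne_nil w t),
      List.getLast?_append_of_ne_nil _ (List.cons_ne_nil w t)]
  · intro x z hxU hxN hxz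
    rw [mem_insert, not_or] at hxU
    have hxw : x ≠ w := fun h => hxN (mem_relImage.2 ⟨y, mem_insert_self y U, h ▸ hyw⟩)
    have hxu : x ≠ u := fun h => hxU.2 (h ▸ hu)
    refine hkeep x z hxU.2 (fun h => hxN (relImage_mono (subset_insert y U) h)) ?_
    rcases consecutive_append hxz with h | h | ⟨h, -⟩ | ⟨-, h⟩
    · exact (consecutive_reverse.1 h).append_right
    · exact h.append_left
    · rw [List.getLast?_reverse, hhead'] at h
      exact absurd (Option.some.inj h).symm hxu
    · exact absurd (Option.some.inj h).symm hxw

theorem exists_isRotationEnd_of_expand (hl₀ : IsLongestPathList G l₀) (hu : l₀.head? = some u)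
    {m : ℕ} (hexp : ∀ U : Finset V, #U < m → 2 * #U ≤ #(extNbhd G U)) (j : ℕ) (hj : j < m) :
    ∃ U : Finset V, #U = j + 1 ∧ u ∈ U ∧ ∀ x ∈ U, IsRotationEnd G l₀ U x := by
  induction j with
  | zero =>
    refine ⟨{u}, card_singleton u, mem_singleton_self u, fun x hx => ?_⟩
    rw [mem_singleton] at hx
    exact ⟨l₀, hl₀.1, List.Perm.refl _, hx ▸ hu, rfl, fun _ _ _ _ h => h⟩
  | succ j ih =>
    obtain ⟨U, hcard, huU, hU⟩ := ih (by lia)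
    have hlt : #(relImage (Consecutive l₀) U) < #(extNbhd G U) :=
      (card_relImage_consecutive_lt hl₀.1.2 hu huU).trans_le (hexp U (by lia))
    obtain ⟨w, hw, hwN⟩ := exists_mem_notMem_of_card_lt_card hlt
    obtain ⟨hwU, x, hx, hxw⟩ := mem_extNbhd.1 hw
    obtain ⟨y, hyU, -, hy⟩ := (hU x hx).exists_of_adj hl₀ hx hxw hwU hwN
    refine ⟨insert y U, by rw [card_insert_of_notMem hyU, hcard], mem_insert_of_mem huU, ?_⟩
    intro z hz
    rcases mem_insert.1 hz with rfl | hz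
    · exact hy
    · exact (hU z hz).mono (subset_insert y U)

-- Every exterior neighbour of the set `U` of rotation ends is next to a rotation end on `l₀`.
theorem exists_card_extNbhd_le_two_mul_card_endSet (hl₀ : IsLongestPathList G l₀)
    (hv : l₀.getLast? = some v) {m : ℕ} (hm : 0 < m)
    (hexp : ∀ U : Finset V, #U < m → 2 * #U ≤ #(extNbhd G U)) :
    ∃ U : Finset V, #U = m ∧ #(extNbhd G U) ≤ 2 * #(endSet G v) := by
  obtain ⟨u, hu⟩ : ∃ u, l₀.head? = some u :=
    ⟨_, List.head?_eq_some_head (fun h => by simp [h] at hv)⟩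
  obtain ⟨U, hcard, -, hU⟩ := exists_isRotationEnd_of_expand hl₀ hu hexp (m - 1) (by lia)
  refine ⟨U, by lia, le_trans (card_le_card fun w hw => ?_)
    (card_relImage_consecutive_le hl₀.1.2 (endSet G v))⟩
  obtain ⟨hwU, x, hx, hxw⟩ := mem_extNbhd.1 hw
  by_cases hwN : w ∈ relImage (Consecutive l₀) U
  · obtain ⟨y, hy, hyw⟩ := mem_relImage.1 hwN
    exact mem_relImage.2 ⟨y, (hU y hy).mem_endSet hl₀ hv, hyw⟩
  · obtain ⟨y, -, hyw, hy⟩ := (hU x hx).exists_of_adj hl₀ hx hxw hwU hwN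
    exact mem_relImage.2 ⟨y, hy.mem_endSet hl₀ hv, hyw⟩

end Rotations

section Boosters

variable {V : Type*} [Fintype V] {F G Γ : SimpleGraph V} {l : List V} {u v w : V} {m : ℕ}

/-- The expansion behind Pósa's lemma: sets of fewer than `m` vertices have at least twice as many
exterior neighbours, and sets of at least `m` vertices meet an edge to every third of the
vertices. -/
structure IsPosaExpander (G : SimpleGraph V) (m : ℕ) : Prop where
  expand : ∀ U : Finset V, #U < m → 2 * #U ≤ #(extNbhd G U)
  join : ∀ U Z : Finset V, m ≤ #U → Fintype.card V ≤ 3 * #Z → ∃ u ∈ U, ∃ z ∈ Z, G.Adj u z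

theorem IsPosaExpander.exists_adj_compl_of_two_mul_card_le (hG : IsPosaExpander G m)
    {Y : Finset V} (hY : Y.Nonempty) (hcard : 2 * #Y ≤ Fintype.card V) :
    ∃ a ∈ Y, ∃ b ∈ Yᶜ, G.Adj a b := by
  have hpos := hY.card_pos
  rcases lt_or_ge #Y m with hm | hm
  · obtain ⟨b, hb⟩ := card_pos.1 (lt_of_lt_of_le (by lia) (hG.expand Y hm))
    obtain ⟨hbY, a, ha, hab⟩ := mem_extNbhd.1 hb
    exact ⟨a, ha, b, mem_compl.2 hbY, hab⟩
  · exact hG.join Y Yᶜ hm (by rw [card_compl]; lia)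

theorem IsPosaExpander.exists_adj_compl (hG : IsPosaExpander G m) {Y : Finset V}
    (hY : Y.Nonempty) (hYc : Yᶜ.Nonempty) : ∃ a ∈ Y, ∃ b ∈ Yᶜ, G.Adj a b := by
  rcases le_total (2 * #Y) (Fintype.card V) with h | h
  · exact hG.exists_adj_compl_of_two_mul_card_le hY h
  · obtain ⟨b, hb, a, ha, hba⟩ :=
      hG.exists_adj_compl_of_two_mul_card_le hYc (by rw [card_compl]; lia)
    exact ⟨a, by simpa using ha, b, hb, hba.symm⟩

theorem IsPosaExpander.three_mul_card_lt (hG : IsPosaExpander G m) {U : Finset V} (hU : m ≤ #U) :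
    2 * Fintype.card V < 3 * (#U + #(extNbhd G U)) := by
  have hfar : 3 * #(U ∪ extNbhd G U)ᶜ < Fintype.card V := by
    by_contra! h
    obtain ⟨u, hu, z, hz, huz⟩ := hG.join U _ hU h
    rw [mem_compl, mem_union, not_or] at hz
    exact hz.2 (mem_extNbhd.2 ⟨hz.1, u, hu, huz⟩)
  rw [card_compl] at hfar
  have hunion := card_union_le U (extNbhd G U)
  lia

theorem IsPosaExpander.card_endSet (hG : IsPosaExpander G m) (hm : 0 < m)
    (hv : (endSet G v).Nonempty) : 2 * Fintype.card V ≤ 3 * m + 6 * #(endSet G v) := by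
  obtain ⟨u, hu⟩ := hv
  obtain ⟨l, hl, -, hlast⟩ := mem_endSet.1 hu
  obtain ⟨U, hU, hN⟩ :=
    exists_card_extNbhd_le_two_mul_card_endSet hl hlast hm fun U => hG.expand U
  have hlt := hG.three_mul_card_lt hU.ge
  lia

/-- The set of all ends of longest paths of `G`. -/
noncomputable def pathEnds (G : SimpleGraph V) : Finset V := {v | (endSet G v).Nonempty}

theorem mem_pathEnds : v ∈ pathEnds G ↔ (endSet G v).Nonempty := by
  simp [pathEnds]

theorem IsLongestPathList.exists_mem_endSet [Nonempty V] (hl : IsLongestPathList G l) :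
    ∃ u v, u ∈ endSet G v := by
  have hne : l ≠ [] := by
    rintro rfl
    obtain ⟨a⟩ := ‹Nonempty V›
    exact absurd (hl.2 [a] ⟨List.isChain_singleton a, List.nodup_singleton a⟩) (by simp)
  exact ⟨_, _, mem_endSet.2
    ⟨l, hl, List.head?_eq_some_head hne, List.getLast?_eq_some_getLast hne⟩⟩

theorem IsPosaExpander.card_pathEnds [Nonempty V] (hG : IsPosaExpander G m) (hm : 0 < m)
    (hl : IsLongestPathList G l) : 2 * Fintype.card V ≤ 3 * m + 6 * #(pathEnds G) := by
  obtain ⟨u, v, huv⟩ := hl.exists_mem_endSet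
  have hsub : endSet G v ⊆ pathEnds G := fun w hw => mem_pathEnds.2 ⟨v, mem_endSet_comm.1 hw⟩
  have hcard := hG.card_endSet hm ⟨u, huv⟩
  have hle := card_le_card hsub
  lia

theorem IsPathList.isHamiltonian [DecidableEq V] (hl : IsPathList G l) (hall : ∀ a, a ∈ l)
    (hcard : 3 ≤ Fintype.card V) (hu : l.head? = some u) (hv : l.getLast? = some v)
    (hvu : G.Adj v u) : G.IsHamiltonian := by
  intro _
  have hne : l ≠ [] := fun h => by simp [h] at hu
  have hlen : l.length = Fintype.card V := by
    rw [← List.toFinset_card_of_nodup hl.2, ← card_univ]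
    congr
    ext a
    simp [hall]
  have hadj : G.Adj (l.getLast hne) (l.head hne) := by
    rw [List.head?_eq_some_head hne, Option.some.injEq] at hu
    rw [List.getLast?_eq_some_getLast hne, Option.some.injEq] at hv
    rwa [hu, hv]
  set q := Walk.ofSupport l hne hl.1
  have hqs : q.support = l := Walk.support_ofSupport hne hl.1
  have htail : (Walk.cons hadj q).tail.support = l := by
    rw [Walk.support_tail_of_not_nil _ Walk.not_nil_cons, Walk.support_cons, hqs, List.tail_cons]
  have hpath : (Walk.cons hadj q).tail.IsPath := by rw [Walk.isPath_def, htail]; exact hl.2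
  have hlength : 3 ≤ (Walk.cons hadj q).length := by
    have hsupp := q.length_support
    rw [hqs] at hsupp
    rw [Walk.length_cons]
    lia
  refine ⟨_, Walk.cons hadj q, ?_⟩
  rw [Walk.isHamiltonianCycle_isCycle_and_isHamiltonian_tail]
  exact ⟨Walk.isCycle_iff_isPath_tail_and_le_length.2 ⟨hpath, hlength⟩,
    hpath.isHamiltonian_of_mem fun a => by rw [htail]; exact hall a⟩

theorem IsPosaExpander.exists_longer_of_adj (hG : IsPosaExpander G m) (hl : IsPathList G l)
    (hu : l.head? = some u) (hv : l.getLast? = some v) (hvu : G.Adj v u) (hw : w ∉ l) :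
    ∃ l', IsPathList G l' ∧ l.length < l'.length := by
  obtain ⟨a, ha, b, hb, hab⟩ := hG.exists_adj_compl (Y := l.toFinset)
    ⟨u, List.mem_toFinset.2 (List.mem_of_head? hu)⟩
    ⟨w, by simpa using hw⟩
  rw [List.mem_toFinset] at ha
  rw [mem_compl, List.mem_toFinset] at hb
  obtain ⟨s, t, rfl⟩ := List.append_of_mem ha
  have hperm : (a :: t ++ s).Perm (s ++ a :: t) := List.perm_append_comm
  refine ⟨b :: (a :: t ++ s), (hl.rotate_cyclic hu hv hvu).cons rfl hab
    fun h => hb (hperm.mem_iff.1 h), ?_⟩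
  rw [List.length_cons, hperm.length_eq]
  exact Nat.lt_succ_self _

theorem IsPosaExpander.isHamiltonian_or_exists_longer [DecidableEq V] (hG : IsPosaExpander G m)
    (hcard : 3 ≤ Fintype.card V) (hl : IsPathList G l) (hu : l.head? = some u)
    (hv : l.getLast? = some v) (hvu : G.Adj v u) :
    G.IsHamiltonian ∨ ∃ l', IsPathList G l' ∧ l.length < l'.length := by
  by_cases hall : ∀ a, a ∈ l
  · exact .inl (hl.isHamiltonian hall hcard hu hv hvu)
  · obtain ⟨w, hw⟩ := not_forall.1 hall
    exact .inr (hG.exists_longer_of_adj hl hu hv hvu hw)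

theorem edgeCount_eq_ncard (G : SimpleGraph V) : edgeCount G = G.edgeSet.ncard := by
  rw [edgeCount, ← coe_edgeFinset, Set.ncard_coe_finset]

theorem edgeCount_sup_le (G F : SimpleGraph V) :
    edgeCount (G ⊔ F) ≤ edgeCount G + edgeCount F := by
  simp only [edgeCount_eq_ncard, edgeSet_sup]
  exact Set.ncard_union_le _ _

theorem edgeCount_fromEdgeSet_le (E : Finset (Sym2 V)) :
    edgeCount (fromEdgeSet (E : Set (Sym2 V))) ≤ #E := by
  rw [edgeCount_eq_ncard, edgeSet_fromEdgeSet, ← Set.ncard_coe_finset]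
  exact Set.ncard_le_ncard Set.sdiff_subset E.finite_toSet

-- `Γ` has the longest path among the graphs obtained from `Γ₀` by adding at most as many edges of
-- `F` as that path has vertices.
theorem exists_saturated {Γ₀ : SimpleGraph V} (hΓ₀ : Γ₀ ≤ F) :
    ∃ Γ, Γ₀ ≤ Γ ∧ Γ ≤ F ∧ edgeCount Γ ≤ edgeCount Γ₀ + Fintype.card V ∧
      ∃ l, IsLongestPathList Γ l ∧
        ∀ u v, F.Adj u v → ∀ l', IsPathList (Γ ⊔ edge u v) l' → l'.length ≤ l.length := by
  let P : ℕ → Prop := fun j => ∃ Γ, Γ₀ ≤ Γ ∧ Γ ≤ F ∧ edgeCount Γ ≤ edgeCount Γ₀ + j ∧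
    ∃ l, IsPathList Γ l ∧ l.length = j
  have hbound : ∀ j, P j → j ≤ Fintype.card V := by
    rintro _ ⟨_, _, _, _, l, hl, rfl⟩
    exact hl.2.length_le_card
  have hzero : P 0 := ⟨Γ₀, le_rfl, hΓ₀, le_rfl, [], ⟨List.isChain_nil, List.nodup_nil⟩, rfl⟩
  obtain ⟨Γ, hΓ₀Γ, hΓF, hcount, l, hl, hlen⟩ := Nat.findGreatest_spec (Nat.zero_le _) hzero
  have hmax : ∀ l' : List V, P l'.length → l'.length ≤ l.length := fun l' h =>
    hlen ▸ Nat.le_findGreatest (hbound _ h) h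
  refine ⟨Γ, hΓ₀Γ, hΓF, hcount.trans (by gcongr; exact Nat.findGreatest_le _), l, ⟨hl, ?_⟩, ?_⟩
  · intro l' hl'
    by_contra! hlt
    exact hlt.not_ge (hmax l' ⟨Γ, hΓ₀Γ, hΓF, by lia, l', hl', rfl⟩)
  · intro u v huv l' hl'
    by_contra! hlt
    have hedge : edgeCount (edge u v) ≤ 1 := by
      have h := edgeCount_fromEdgeSet_le {s(u, v)}
      rwa [coe_singleton, card_singleton] at h
    have hsup := edgeCount_sup_le Γ (edge u v)
    exact hlt.not_ge (hmax l' ⟨Γ ⊔ edge u v, hΓ₀Γ.trans le_sup_left,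
      sup_le hΓF ((edge_le_iff F).2 (.inr huv)), by lia, l', hl', rfl⟩)

theorem exists_saturated_of_not_isHamiltonian [DecidableEq V] {Γ₀ : SimpleGraph V} (hΓ₀ : Γ₀ ≤ F)
    (hexp : ∀ Γ, Γ₀ ≤ Γ → Γ ≤ F → IsPosaExpander Γ m) (hcard : 3 ≤ Fintype.card V)
    (hF : ¬ F.IsHamiltonian) :
    ∃ Γ ≤ F, IsPosaExpander Γ m ∧ edgeCount Γ ≤ edgeCount Γ₀ + Fintype.card V ∧
      (∃ l, IsLongestPathList Γ l) ∧ ∀ v, ∀ u ∈ endSet Γ v, ¬ F.Adj v u := by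
  obtain ⟨Γ, hΓ₀Γ, hΓF, hcount, l, hl, hsat⟩ := exists_saturated hΓ₀
  refine ⟨Γ, hΓF, hexp Γ hΓ₀Γ hΓF, hcount, ⟨l, hl⟩, fun v u hu hvu => ?_⟩
  obtain ⟨l₁, hl₁, hhead, hlast⟩ := mem_endSet.1 hu
  have hle : Γ ⊔ edge v u ≤ F := sup_le hΓF ((edge_le_iff F).2 (.inr hvu))
  have hadj : (Γ ⊔ edge v u).Adj v u := .inr (by simp [edge_adj, hvu.ne])
  rcases (hexp _ (hΓ₀Γ.trans le_sup_left) hle).isHamiltonian_or_exists_longer hcard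
    (hl₁.1.mono le_sup_left) hhead hlast hadj with hham | ⟨l', hl', hlt⟩
  · exact hF (hham.mono hle)
  · exact ((hsat v u hvu l' hl').trans (hl₁.2 l hl.1)).not_gt hlt

/-- The pairs of distinct nonadjacent vertices that are the two ends of a longest path of `G`. -/
noncomputable def closingPairs (G : SimpleGraph V) : Finset (V × V) :=
  {q | q.1 ≠ q.2 ∧ ¬ G.Adj q.1 q.2 ∧ q.2 ∈ endSet G q.1}

theorem mem_closingPairs {q : V × V} :
    q ∈ closingPairs G ↔ q.1 ≠ q.2 ∧ ¬ G.Adj q.1 q.2 ∧ q.2 ∈ endSet G q.1 := by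
  simp [closingPairs]

theorem card_pathEnds_mul_le_card_closingPairs {x : ℝ}
    (hx : ∀ v ∈ pathEnds G, x + 1 ≤ #(endSet G v)) (hno : ∀ v, ∀ u ∈ endSet G v, ¬ G.Adj v u) :
    #(pathEnds G) * x ≤ #(closingPairs G) := by
  have hsub : (pathEnds G).sigma (fun v => (endSet G v).erase v) ⊆
      (closingPairs G).map (Equiv.sigmaEquivProd V V).symm.toEmbedding := by
    rintro ⟨v, u⟩ h
    obtain ⟨-, hu⟩ := mem_sigma.1 h
    obtain ⟨huv, hu⟩ := mem_erase.1 hu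
    exact mem_map.2 ⟨(v, u), mem_closingPairs.2 ⟨huv.symm, hno v u hu, hu⟩, rfl⟩
  calc #(pathEnds G) * x ≤ ∑ v ∈ pathEnds G, (#((endSet G v).erase v) : ℝ) := by
        rw [← nsmul_eq_mul]
        refine card_nsmul_le_sum _ _ _ fun v hv => ?_
        have herase : (#(endSet G v) : ℝ) ≤ #((endSet G v).erase v) + 1 := by
          exact_mod_cast Nat.sub_le_iff_le_add.1 pred_card_le_card_erase
        linarith [hx v hv]
    _ ≤ #(closingPairs G) := by
        rw [← Nat.cast_sum, ← card_sigma]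
        exact_mod_cast (card_le_card hsub).trans (card_map _).le

end Boosters

section AdjPairs

variable {V : Type*} {F G H : SimpleGraph V} {S S' : Finset (V × V)} {q : V × V}

/-- The pairs in `S` that are adjacent in `G`; thus `eBetween G U Z = #(adjPairs G (U ×ˢ Z))`. An
edge counts twice if `S` contains it in both orders. -/
noncomputable def adjPairs (G : SimpleGraph V) (S : Finset (V × V)) : Finset (V × V) :=
  {q ∈ S | G.Adj q.1 q.2}

theorem mem_adjPairs : q ∈ adjPairs G S ↔ q ∈ S ∧ G.Adj q.1 q.2 := mem_filter

theorem adjPairs_mono (h : F ≤ G) (hS : S ⊆ S') : adjPairs F S ⊆ adjPairs G S' := fun _ hq =>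
  mem_adjPairs.2 ((mem_adjPairs.1 hq).imp (@hS _) (@h _ _))

variable [Fintype V]

theorem card_adjPairs_product_univ (G : SimpleGraph V) (A : Finset V) :
    #(adjPairs G (A ×ˢ univ)) = ∑ v ∈ A, G.degree v := by
  have hmap : (A.sigma fun v => G.neighborFinset v).map (Equiv.sigmaEquivProd V V).toEmbedding =
      adjPairs G (A ×ˢ univ) := by
    ext ⟨v, w⟩
    simp [mem_adjPairs, Equiv.sigmaEquivProd]
  rw [← hmap, card_map, card_sigma]
  rfl

theorem card_adjPairs_le_add_sum_degree (h : G ≤ F ⊔ H) {A : Finset V} (hS : ∀ q ∈ S, q.1 ∈ A) :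
    #(adjPairs G S) ≤ #(adjPairs F S) + ∑ v ∈ A, H.degree v := by
  rw [← card_adjPairs_product_univ]
  refine (card_le_card fun q hq => ?_).trans (card_union_le _ _)
  obtain ⟨hqS, hq⟩ := mem_adjPairs.1 hq
  rcases h hq with hq | hq
  · exact mem_union_left _ (mem_adjPairs.2 ⟨hqS, hq⟩)
  · exact mem_union_right _ (mem_adjPairs.2 ⟨mem_product.2 ⟨hS q hqS, mem_univ _⟩, hq⟩)

theorem degree_le_degree_add_degree (h : G ≤ F ⊔ H) (v : V) :
    G.degree v ≤ F.degree v + H.degree v := by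
  have hsum := card_adjPairs_le_add_sum_degree h (S := {v} ×ˢ univ) (A := {v})
    fun q hq => (mem_product.1 hq).1
  simpa only [card_adjPairs_product_univ, sum_singleton] using hsum

end AdjPairs

section HittingSets

variable {α ι : Type*} {E : Finset α} {I : Finset ι} {T : ι → Finset α} {a : ℝ}

theorem exists_popular (hE : E.Nonempty) (hT : ∀ i ∈ I, T i ⊆ E)
    (hbig : ∀ i ∈ I, a * #E ≤ #(T i)) : ∃ e ∈ E, a * #I ≤ #{i ∈ I | e ∈ T i} := by
  refine exists_le_of_sum_le hE ?_
  calc ∑ _e ∈ E, a * #I = ∑ _i ∈ I, a * #E := by simp only [sum_const, nsmul_eq_mul]; ring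
    _ ≤ ∑ i ∈ I, (#(T i) : ℝ) := sum_le_sum hbig
    _ = ∑ i ∈ I, (#{e ∈ E | e ∈ T i} : ℝ) := sum_congr rfl fun i hi => by
        rw [filter_mem_eq_inter, inter_eq_right.2 (hT i hi)]
    _ = ∑ e ∈ E, (#{i ∈ I | e ∈ T i} : ℝ) := by
        exact_mod_cast (sum_card_bipartiteAbove_eq_sum_card_bipartiteBelow fun e i => e ∈ T i).symm

theorem exists_greedy_hitting (hE : E.Nonempty) (ha : a ≤ 1) (hT : ∀ i ∈ I, T i ⊆ E)
    (hbig : ∀ i ∈ I, a * #E ≤ #(T i)) (t : ℕ) :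
    ∃ R ⊆ E, #R ≤ t ∧ (#{i ∈ I | Disjoint R (T i)} : ℝ) ≤ (1 - a) ^ t * #I := by
  induction t with
  | zero => exact ⟨∅, empty_subset E, le_rfl, by simp⟩
  | succ t ih =>
    obtain ⟨R, hRE, hRt, hR⟩ := ih
    set J : Finset ι := {i ∈ I | Disjoint R (T i)}
    have hJI : J ⊆ I := filter_subset _ _
    obtain ⟨e, he, hpop⟩ := exists_popular (I := J) hE (fun i hi => hT i (hJI hi))
      fun i hi => hbig i (hJI hi)
    have hsplit : #{i ∈ J | e ∈ T i} + #{i ∈ I | Disjoint (insert e R) (T i)} = #J := by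
      rw [← card_filter_add_card_filter_not (s := J) fun i => e ∈ T i]
      congr 2
      rw [filter_filter]
      exact filter_congr fun i _ => by rw [disjoint_insert_left, and_comm]
    refine ⟨insert e R, insert_subset he hRE, (card_insert_le e R).trans (by lia), ?_⟩
    have hsplit : (#{i ∈ J | e ∈ T i} : ℝ) + #{i ∈ I | Disjoint (insert e R) (T i)} = #J := by
      exact_mod_cast hsplit
    calc (#{i ∈ I | Disjoint (insert e R) (T i)} : ℝ) ≤ (1 - a) * #J := by linarith
      _ ≤ (1 - a) * ((1 - a) ^ t * #I) := by gcongr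
      _ = (1 - a) ^ (t + 1) * #I := by ring

theorem exists_hitting (hE : E.Nonempty) (ha : a ≤ 1) (hT : ∀ i ∈ I, T i ⊆ E)
    (hbig : ∀ i ∈ I, a * #E ≤ #(T i)) {t : ℕ} (ht : #I < Real.exp (a * t)) :
    ∃ R ⊆ E, #R ≤ t ∧ ∀ i ∈ I, ¬ Disjoint R (T i) := by
  obtain ⟨R, hRE, hRt, hR⟩ := exists_greedy_hitting hE ha hT hbig t
  refine ⟨R, hRE, hRt, fun i hi hdisj => ?_⟩
  have hlt : (#{i ∈ I | Disjoint R (T i)} : ℝ) < 1 := calc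
    _ ≤ (1 - a) ^ t * #I := hR
    _ ≤ Real.exp (-a) ^ t * #I := by
      gcongr
      exact Real.one_sub_le_exp_neg a
    _ < Real.exp (-a) ^ t * Real.exp (a * t) := by gcongr
    _ = 1 := by rw [← Real.exp_nat_mul, ← Real.exp_add]; ring_nf; exact Real.exp_zero
  have hpos : 0 < #{i ∈ I | Disjoint R (T i)} := card_pos.2 ⟨i, mem_filter.2 ⟨hi, hdisj⟩⟩
  exact (Nat.cast_lt_one.1 hlt).not_gt hpos

end HittingSets

section SparseSubgraphs

variable {V : Type*} [Fintype V] {F : SimpleGraph V}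

theorem exists_subgraph_adj {R : Finset (V × V)} (hR : ∀ q ∈ R, F.Adj q.1 q.2) :
    ∃ Γ ≤ F, edgeCount Γ ≤ #R ∧ ∀ q ∈ R, Γ.Adj q.1 q.2 := by
  refine ⟨fromEdgeSet (R.image fun q => s(q.1, q.2) : Finset (Sym2 V)), ?_,
    (edgeCount_fromEdgeSet_le _).trans card_image_le, fun q hq => ?_⟩
  · intro u v huv
    obtain ⟨q, hq, hquv⟩ := mem_image.1 (mem_coe.1 ((fromEdgeSet_adj _).1 huv).1)
    rw [← mem_edgeSet, ← hquv]
    exact hR q hq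
  · exact (fromEdgeSet_adj _).2 ⟨mem_coe.2 (mem_image_of_mem _ hq), (hR q hq).ne⟩

theorem exists_subgraph_min_degree_le (F : SimpleGraph V) (k : ℕ) :
    ∃ Γ ≤ F, edgeCount Γ ≤ Fintype.card V * k ∧ ∀ v, min k (F.degree v) ≤ Γ.degree v := by
  choose C hCF hCcard using fun v => exists_subset_card_eq (min_le_right k #(F.neighborFinset v))
  obtain ⟨Γ, hΓF, hΓ, hadj⟩ := exists_subgraph_adj (F := F)
    (R := (univ.sigma C).map (Equiv.sigmaEquivProd V V).toEmbedding) (by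
      rintro _ hq
      obtain ⟨⟨v, w⟩, hvw, rfl⟩ := mem_map.1 hq
      exact (mem_neighborFinset _ _ _).1 (hCF v (mem_sigma.1 hvw).2))
  refine ⟨Γ, hΓF, hΓ.trans ?_, fun v => ?_⟩
  · rw [card_map, card_sigma, Fintype.card, ← smul_eq_mul]
    exact sum_le_card_nsmul _ _ _ fun v _ => (hCcard v).trans_le (min_le_left _ _)
  · rw [← card_neighborFinset_eq_degree, ← card_neighborFinset_eq_degree, ← hCcard v]
    refine card_le_card fun w hw => (mem_neighborFinset _ _ _).2 (hadj (v, w) ?_)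
    exact mem_map.2 ⟨⟨v, w⟩, mem_sigma.2 ⟨mem_univ v, hw⟩, rfl⟩

theorem exists_subgraph_join [Nonempty V] {a : ℝ} {m t : ℕ} (hF : F ≠ ⊥) (ha : a ≤ 1)
    (hbig : ∀ U Z : Finset V, m ≤ #U → Fintype.card V ≤ 3 * #Z →
      a * #(adjPairs F univ) ≤ eBetween F U Z)
    (ht : 2 * Fintype.card V ≤ a * t) :
    ∃ Γ ≤ F, edgeCount Γ ≤ t ∧
      ∀ U Z : Finset V, m ≤ #U → Fintype.card V ≤ 3 * #Z → ∃ u ∈ U, ∃ z ∈ Z, Γ.Adj u z := by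
  obtain ⟨u, v, huv⟩ := ne_bot_iff_exists_adj.1 hF
  have hE : (adjPairs F univ).Nonempty := ⟨(u, v), mem_adjPairs.2 ⟨mem_univ _, huv⟩⟩
  let I : Finset (Finset V × Finset V) := {i | m ≤ #i.1 ∧ Fintype.card V ≤ 3 * #i.2}
  have hI : (#I : ℝ) < Real.exp (a * t) := calc
    (#I : ℝ) ≤ (2 ^ Fintype.card V * 2 ^ Fintype.card V : ℕ) := by
      rw [← Fintype.card_finset, ← Fintype.card_prod]
      exact_mod_cast card_le_univ I
    _ = 2 ^ (2 * Fintype.card V) := by push_cast; ring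
    _ < Real.exp 1 ^ (2 * Fintype.card V) := by
      gcongr
      exact Real.exp_one_gt_two
    _ ≤ Real.exp (a * t) := by
      rw [← Real.exp_nat_mul]
      exact Real.exp_le_exp.2 (by push_cast; linarith)
  obtain ⟨R, hRF, hRt, hR⟩ := exists_hitting (I := I) (T := fun i => adjPairs F (i.1 ×ˢ i.2)) hE ha
    (fun i _ => adjPairs_mono le_rfl (subset_univ _))
    (fun i hi => hbig i.1 i.2 (mem_filter.1 hi).2.1 (mem_filter.1 hi).2.2) hI
  obtain ⟨Γ, hΓF, hΓ, hadj⟩ := exists_subgraph_adj fun q hq => (mem_adjPairs.1 (hRF hq)).2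
  refine ⟨Γ, hΓF, hΓ.trans hRt, fun U Z hU hZ => ?_⟩
  obtain ⟨q, hqR, hq⟩ := not_disjoint_iff.1 (hR (U, Z) (mem_filter.2 ⟨mem_univ _, hU, hZ⟩))
  obtain ⟨hqU, hqZ⟩ := mem_product.1 (mem_adjPairs.1 hq).1
  exact ⟨q.1, hqU, q.2, hqZ, hadj q hqR⟩

theorem exists_skeleton [Nonempty V] {a : ℝ} {m t : ℕ} (k : ℕ) (hF : F ≠ ⊥) (ha : a ≤ 1)
    (hbig : ∀ U Z : Finset V, m ≤ #U → Fintype.card V ≤ 3 * #Z →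
      a * #(adjPairs F univ) ≤ eBetween F U Z)
    (ht : 2 * Fintype.card V ≤ a * t) :
    ∃ Γ₀ ≤ F, edgeCount Γ₀ ≤ Fintype.card V * k + t ∧
      ∀ Γ, Γ₀ ≤ Γ → (∀ v, min k (F.degree v) ≤ Γ.degree v) ∧
        ∀ U Z : Finset V, m ≤ #U → Fintype.card V ≤ 3 * #Z → ∃ u ∈ U, ∃ z ∈ Z, Γ.Adj u z := by
  obtain ⟨Γ₁, hΓ₁F, hΓ₁, hdeg⟩ := exists_subgraph_min_degree_le F k
  obtain ⟨Γ₂, hΓ₂F, hΓ₂, hjoin⟩ := exists_subgraph_join hF ha hbig ht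
  refine ⟨Γ₁ ⊔ Γ₂, sup_le hΓ₁F hΓ₂F, (edgeCount_sup_le _ _).trans (add_le_add hΓ₁ hΓ₂),
    fun Γ hΓ => ⟨fun v => ?_, fun U Z hU hZ => ?_⟩⟩
  · exact (hdeg v).trans (degree_le_of_le (le_sup_left.trans hΓ))
  · obtain ⟨u, hu, z, hz, huz⟩ := hjoin U Z hU hZ
    exact ⟨u, hu, z, hz, hΓ (le_sup_right (a := Γ₁) huz)⟩

end SparseSubgraphs

section Separation

variable {V : Type*} {G F : SimpleGraph V} {D : Finset V} {r : ℕ} {u v w x y z : V}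

/-- The vertices of `D` are pairwise at distance more than `r`, and no cycle of length at most `r`
passes through any of them. -/
structure IsSeparated (G : SimpleGraph V) (D : Finset V) (r : ℕ) : Prop where
  path : ∀ u ∈ D, ∀ v ∈ D, ∀ q : G.Walk u v, q.IsPath → 0 < q.length → r < q.length
  cycle : ∀ u ∈ D, ∀ q : G.Walk u u, q.IsCycle → r < q.length

theorem IsSeparated.mono (h : IsSeparated G D r) (hFG : F ≤ G) : IsSeparated F D r where
  path u hu v hv q hq hpos := by
    simpa using h.path u hu v hv (q.mapLe hFG) (hq.mapLe hFG) (by simpa using hpos)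
  cycle u hu q hq := by simpa using h.cycle u hu (q.mapLe hFG) (hq.mapLe hFG)

theorem IsSeparated.not_adj (h : IsSeparated G D r) (hr : 1 ≤ r) (hu : u ∈ D) (hv : v ∈ D) :
    ¬ G.Adj u v := fun huv => by
  have hlt := h.path u hu v hv (.cons huv .nil) (by simp [Walk.cons_isPath_iff, huv.ne]) (by simp)
  simp only [Walk.length_cons, Walk.length_nil] at hlt
  lia

theorem IsSeparated.eq_of_adj_adj (h : IsSeparated G D r) (hr : 2 ≤ r) (hu : u ∈ D) (hv : v ∈ D)
    (huw : G.Adj u w) (hvw : G.Adj v w) : u = v := by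
  by_contra huv
  have hlt := h.path u hu v hv (.cons huw (.cons hvw.symm .nil))
    (by simp [Walk.cons_isPath_iff, huw.ne, hvw.ne', huv]) (by simp)
  simp only [Walk.length_cons, Walk.length_nil] at hlt
  lia

theorem IsSeparated.eq_of_adj_of_adj (h : IsSeparated G D r) (hr : 4 ≤ r) (hu : u ∉ D)
    (hux : G.Adj u x) (huy : G.Adj u y) (hx : ∃ z ∈ D, G.Adj z x) (hy : ∃ z ∈ D, G.Adj z y) :
    x = y := by
  obtain ⟨z, hz, hzx⟩ := hx
  obtain ⟨w, hw, hwy⟩ := hy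
  by_contra hxy
  have huz : z ≠ u := fun h => hu (h ▸ hz)
  have huw : u ≠ w := fun h => hu (h ▸ hw)
  by_cases hzw : z = w
  · subst hzw
    have hlt := h.cycle z hz (.cons hzx (.cons hux.symm (.cons huy (.cons hwy.symm .nil))))
      (by simp [Walk.cons_isCycle_iff, Walk.cons_isPath_iff, hux.ne', hxy, hzx.ne', huy.ne, huw,
        hwy.ne', huz, hzx.ne])
    simp only [Walk.length_cons, Walk.length_nil] at hlt
    lia
  · have hzy : z ≠ y := by
      rintro rfl
      exact h.not_adj (by lia) hw hz hwy
    have hxw : x ≠ w := by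
      rintro rfl
      exact h.not_adj (by lia) hz hw hzx
    have hlt := h.path z hz w hw (.cons hzx (.cons hux.symm (.cons huy (.cons hwy.symm .nil))))
      (by simp [Walk.cons_isPath_iff, hux.ne', hxy, hxw, huy.ne, huw, hwy.ne', hzx.ne, huz, hzy,
        hzw]) (by simp)
    simp only [Walk.length_cons, Walk.length_nil] at hlt
    lia

end Separation

section Expansion

variable {V : Type*} [Fintype V] {G : SimpleGraph V} {D U : Finset V} {r : ℕ}

theorem sum_degree_le_eBetween (G : SimpleGraph V) (U : Finset V) :
    ∑ v ∈ U, G.degree v ≤ eBetween G (U ∪ extNbhd G U) (U ∪ extNbhd G U) := by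
  rw [← card_adjPairs_product_univ]
  refine card_le_card fun q hq => ?_
  obtain ⟨hqU, hq⟩ := mem_adjPairs.1 hq
  have hU := (mem_product.1 hqU).1
  refine mem_adjPairs.2 ⟨mem_product.2 ⟨mem_union_left _ hU, ?_⟩, hq⟩
  rw [mem_union, mem_extNbhd]
  exact (em _).imp_right fun h => ⟨h, q.1, hU, hq⟩

-- Otherwise `U ∪ N(U)` would be a small set spanning too many edges.
theorem mul_card_le_card_extNbhd {c : ℝ} {k : ℕ}
    (hsparse : ∀ W : Finset V, #W ≤ (k + 1) * #U → eBetween G W W ≤ c * #W) (hc : 0 ≤ c)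
    (hdeg : ∀ v ∈ U, (k + 1) * c < G.degree v) : k * #U ≤ #(extNbhd G U) := by
  by_contra! hlt
  have hU : U.Nonempty := by
    rw [nonempty_iff_ne_empty]
    rintro rfl
    simp at hlt
  have hW : #(U ∪ extNbhd G U) ≤ (k + 1) * #U := by
    have hunion := card_union_le U (extNbhd G U)
    lia
  refine lt_irrefl (∑ v ∈ U, (G.degree v : ℝ)) ?_
  calc ∑ v ∈ U, (G.degree v : ℝ) ≤ eBetween G (U ∪ extNbhd G U) (U ∪ extNbhd G U) := by
        exact_mod_cast sum_degree_le_eBetween G U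
    _ ≤ c * #(U ∪ extNbhd G U) := hsparse _ hW
    _ ≤ c * ((k + 1) * #U) := by gcongr; exact_mod_cast hW
    _ = ∑ _v ∈ U, (k + 1) * c := by rw [sum_const, nsmul_eq_mul]; ring
    _ < ∑ v ∈ U, (G.degree v : ℝ) := sum_lt_sum_of_nonempty hU hdeg

theorem IsSeparated.mul_card_le_card_relImage {k : ℕ} (h : IsSeparated G D r) (hr : 2 ≤ r)
    (hU : U ⊆ D) (hdeg : ∀ v ∈ U, k ≤ G.degree v) : k * #U ≤ #(relImage G.Adj U) := by
  have hdisj : (U : Set V).PairwiseDisjoint fun v => G.neighborFinset v := by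
    intro u hu v hv huv
    refine disjoint_left.2 fun w hw hw' => huv ?_
    exact h.eq_of_adj_adj hr (hU hu) (hU hv) ((mem_neighborFinset _ _ _).1 hw)
      ((mem_neighborFinset _ _ _).1 hw')
  have hunion : relImage G.Adj U = U.biUnion fun v => G.neighborFinset v := by
    ext w
    simp [mem_relImage]
  rw [hunion, card_biUnion hdisj, mul_comm]
  exact card_nsmul_le_sum U _ k hdeg

theorem IsSeparated.card_extNbhd_inter_le (h : IsSeparated G D r) (hr : 2 ≤ r) (U : Finset V) :
    #(extNbhd G U ∩ D) ≤ #U := by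
  refine (card_le_card fun x hx => ?_).trans
    (card_relImage_le (R := fun u x => G.Adj u x ∧ x ∈ D) U fun u x y hx hy =>
      h.eq_of_adj_adj hr hx.2 hy.2 hx.1.symm hy.1.symm)
  obtain ⟨hxU, hxD⟩ := mem_inter.1 hx
  obtain ⟨-, u, hu, hux⟩ := mem_extNbhd.1 hxU
  exact mem_relImage.2 ⟨u, hu, hux, hxD⟩

theorem IsSeparated.card_extNbhd_inter_relImage_le (h : IsSeparated G D r) (hr : 4 ≤ r)
    (hU : Disjoint U D) : #(extNbhd G U ∩ relImage G.Adj D) ≤ #U := by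
  refine (card_le_card fun x hx => ?_).trans
    (card_relImage_le (R := fun u x => u ∉ D ∧ G.Adj u x ∧ ∃ z ∈ D, G.Adj z x) U
      fun u x y hx hy => h.eq_of_adj_of_adj hr hx.1 hx.2.1 hy.2.1 hx.2.2 hy.2.2)
  obtain ⟨hxU, hxD⟩ := mem_inter.1 hx
  obtain ⟨-, u, hu, hux⟩ := mem_extNbhd.1 hxU
  exact mem_relImage.2 ⟨u, hu, disjoint_left.1 hU hu, hux, mem_relImage.1 hxD⟩

theorem IsSeparated.subset_extNbhd (h : IsSeparated G D r) (hr : 1 ≤ r) (U : Finset V) :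
    relImage G.Adj (U ∩ D) \ (U \ D) ∪ extNbhd G (U \ D) \ (D ∪ relImage G.Adj (U ∩ D)) ⊆
      extNbhd G U := by
  intro x hx
  rw [mem_extNbhd]
  rcases mem_union.1 hx with hx | hx
  · obtain ⟨hxQ, hxU⟩ := mem_sdiff.1 hx
    obtain ⟨z, hz, hzx⟩ := mem_relImage.1 hxQ
    obtain ⟨hzU, hzD⟩ := mem_inter.1 hz
    exact ⟨fun hxU' => hxU (mem_sdiff.2 ⟨hxU', fun hxD => h.not_adj hr hzD hxD hzx⟩), z, hzU, hzx⟩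
  · obtain ⟨hxN, hxDQ⟩ := mem_sdiff.1 hx
    obtain ⟨hxU, u, hu, hux⟩ := mem_extNbhd.1 hxN
    exact ⟨fun hxU' => hxU (mem_sdiff.2 ⟨hxU', fun hxD => hxDQ (mem_union_left _ hxD)⟩), u,
      (mem_sdiff.1 hu).1, hux⟩

-- The neighbours of `U ∩ D` and of `U \ D` overlap little because `D` is scattered.
theorem IsSeparated.two_mul_card_le_card_extNbhd (h : IsSeparated G D 4)
    (hlow : ∀ v ∈ D, 2 ≤ G.degree v) (hhigh : 5 * #(U \ D) ≤ #(extNbhd G (U \ D))) :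
    2 * #U ≤ #(extNbhd G U) := by
  set N := extNbhd G (U \ D)
  set Q := relImage G.Adj (U ∩ D)
  have hQ : 2 * #(U ∩ D) ≤ #Q :=
    h.mul_card_le_card_relImage (by lia) inter_subset_right fun v hv => hlow v (mem_inter.1 hv).2
  have hND : #(N ∩ D) ≤ #(U \ D) := h.card_extNbhd_inter_le (by lia) _
  have hNQ : #(N ∩ Q) ≤ #(U \ D) :=
    (card_le_card (inter_subset_inter_left (relImage_mono inter_subset_right))).trans
      (h.card_extNbhd_inter_relImage_le le_rfl sdiff_disjoint)
  have hsub := card_le_card (h.subset_extNbhd (by lia) U)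
  have hdisj : Disjoint (Q \ (U \ D)) (N \ (D ∪ Q)) :=
    disjoint_sdiff.mono sdiff_subset (sdiff_subset_sdiff le_rfl subset_union_right)
  rw [card_union_of_disjoint hdisj] at hsub
  have hQU := le_card_sdiff (U \ D) Q
  have hN := card_sdiff_add_card_inter N (D ∪ Q)
  have hNDQ : #(N ∩ (D ∪ Q)) ≤ #(N ∩ D) + #(N ∩ Q) := by
    rw [inter_union_distrib_left]
    exact card_union_le _ _
  have hU := card_sdiff_add_card_inter U D
  lia

end Expansion

section Deterministic

variable {V : Type*} [Fintype V] {F G H Γ : SimpleGraph V} {D : Finset V} {p ε β c : ℝ}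
  {k t M : ℕ} {v : V}

/-- The properties of a typical random graph with `N` vertices and edge probability `p` that force
resilience. Here `D` is the set of vertices of degree less than `N * p / 100`, and `c` bounds the
density of small sets; `adjPairs_closingPairs` says that `G` has about the expected number of edges
among the pairs closing a longest path of a subgraph with at most `M` edges. -/
structure IsTypical (G : SimpleGraph V) (D : Finset V) (p ε β c : ℝ) (M : ℕ) : Prop where
  low : ∀ v, v ∈ D ↔ (G.degree v : ℝ) < Fintype.card V * p / 100
  sum_degree : ∀ A : Finset V, β * Fintype.card V ≤ #A →
    ∑ v ∈ A, (G.degree v : ℝ) ≤ (1 + ε / 8) * (Fintype.card V * p * #A)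
  join : ∀ U Z : Finset V, ε * β * Fintype.card V ≤ #U → (Fintype.card V : ℝ) ≤ 3 * #Z →
    (1 - ε / 8) * (p * (#U * #Z)) ≤ eBetween G U Z
  adjPairs_closingPairs : ∀ Γ ≤ G, edgeCount Γ ≤ M →
    (Fintype.card V : ℝ) ^ 2 / 20 ≤ #(closingPairs Γ) →
    (1 - ε / 8) * (p * #(closingPairs Γ)) ≤ #(adjPairs G (closingPairs Γ))
  sparse : ∀ W : Finset V, (#W : ℝ) ≤ 6 * β * Fintype.card V → eBetween G W W ≤ c * #W
  separated : IsSeparated G D 4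

/-- The degree conditions on the deleted graph `H`, for a set `D` of low-degree vertices of `G`. -/
structure IsAdmissible (G H : SimpleGraph V) (D : Finset V) (ε : ℝ) : Prop where
  low : ∀ v ∈ D, (H.degree v : ℝ) ≤ G.degree v - 2
  high : ∀ v ∉ D, (H.degree v : ℝ) ≤ (1 / 3 - ε) * G.degree v

theorem IsTypical.card_low_le (hG : IsTypical G D p ε β c M) (hp : 0 < p) (hε : 0 < ε)
    (hε3 : ε ≤ 1 / 3) (hβ : 0 < β) : #D ≤ ε * β * Fintype.card V := by
  by_contra! hlt
  have hjoin := hG.join D univ hlt.le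
    (by rw [card_univ]; linarith [(Fintype.card V).cast_nonneg' (α := ℝ)])
  have hdeg : (eBetween G D univ : ℝ) ≤ #D * (Fintype.card V * p / 100) := calc
    (eBetween G D univ : ℝ) = ∑ v ∈ D, (G.degree v : ℝ) := by
      exact_mod_cast card_adjPairs_product_univ G D
    _ ≤ #D * (Fintype.card V * p / 100) := by
      rw [← nsmul_eq_mul]
      exact sum_le_card_nsmul _ _ _ fun v hv => ((hG.low v).1 hv).le
  rw [card_univ] at hjoin
  have hD : (0 : ℝ) < #D := lt_of_le_of_lt (by positivity) hlt
  have hV : (0 : ℝ) < Fintype.card V := hD.trans_le (by exact_mod_cast card_le_univ D)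
  have hpos : 0 < p * (#D * Fintype.card V) := by positivity
  nlinarith

theorem IsTypical.sum_degree_le (hG : IsTypical G D p ε β c M) (hH : IsAdmissible G H D ε)
    (hp : 0 < p) (hε : 0 < ε) (hε3 : ε ≤ 1 / 3) (hβ : 0 < β) {A : Finset V}
    (hA : β * Fintype.card V ≤ #A) :
    ∑ v ∈ A, (H.degree v : ℝ) ≤ (1 / 3 - ε / 2) * (Fintype.card V * p * #A) := by
  set d : ℝ := Fintype.card V * p
  have hD : (#D : ℝ) ≤ ε * #A := calc
    (#D : ℝ) ≤ ε * (β * Fintype.card V) := by linarith [hG.card_low_le hp hε hε3 hβ]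
    _ ≤ ε * #A := by gcongr
  have hdeg : ∀ v ∈ A, (H.degree v : ℝ) ≤
      (if v ∈ D then d / 100 else 0) + (1 / 3 - ε) * G.degree v := by
    intro v _
    have hnonneg : 0 ≤ (1 / 3 - ε) * (G.degree v : ℝ) :=
      mul_nonneg (by linarith) (Nat.cast_nonneg _)
    split_ifs with hv
    · linarith [hH.low v hv, (hG.low v).1 hv]
    · linarith [hH.high v hv]
  have hlow : ∑ v ∈ A, (if v ∈ D then d / 100 else 0) ≤ #D * (d / 100) := by
    rw [← sum_filter, sum_const, nsmul_eq_mul]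
    gcongr
    exact fun v hv => (mem_filter.1 hv).2
  calc ∑ v ∈ A, (H.degree v : ℝ)
      ≤ ∑ v ∈ A, (if v ∈ D then d / 100 else 0) + (1 / 3 - ε) * ∑ v ∈ A, (G.degree v : ℝ) := by
        rw [mul_sum, ← sum_add_distrib]
        exact sum_le_sum hdeg
    _ ≤ ε * #A * (d / 100) + (1 / 3 - ε) * ((1 + ε / 8) * (d * #A)) := by
        gcongr
        · exact hlow.trans (by gcongr)
        · exact hG.sum_degree A hA
    _ ≤ (1 / 3 - ε / 2) * (d * #A) := by
        have hdA : 0 ≤ ε * (d * #A) := by positivity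
        nlinarith

theorem IsTypical.le_eBetween (hG : IsTypical G D p ε β c M) (hH : IsAdmissible G H D ε)
    (hF : G ≤ F ⊔ H) (hp : 0 < p) (hε : 0 < ε) (hε3 : ε ≤ 1 / 3) (hβ : 0 < β) {U Z : Finset V}
    (hU : β * Fintype.card V ≤ #U) (hZ : (Fintype.card V : ℝ) ≤ 3 * #Z) :
    ε / 4 * (Fintype.card V * p * #U) ≤ eBetween F U Z := by
  have hGUZ := hG.join U Z (by nlinarith [(#U).cast_nonneg (α := ℝ)]) hZ
  have hFUZ : (eBetween G U Z : ℝ) ≤ eBetween F U Z + ∑ v ∈ U, (H.degree v : ℝ) := by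
    exact_mod_cast card_adjPairs_le_add_sum_degree hF fun q hq => (mem_product.1 hq).1
  have hsum := hG.sum_degree_le hH hp hε hε3 hβ hU
  have hZU : Fintype.card V * p * #U / 3 ≤ p * (#U * #Z) := by
    have := mul_le_mul_of_nonneg_left hZ (by positivity : 0 ≤ p * #U)
    linarith
  nlinarith [(by positivity : 0 ≤ ε * (Fintype.card V * p * #U))]

theorem IsTypical.card_adjPairs_univ_le (hG : IsTypical G D p ε β c M) (hFG : F ≤ G)
    (hp : 0 < p) (hε3 : ε ≤ 1 / 3) (hβ : β ≤ 1) :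
    #(adjPairs F univ) ≤ 2 * (Fintype.card V * p * Fintype.card V) := calc
  (#(adjPairs F univ) : ℝ) ≤ #(adjPairs G (univ ×ˢ univ)) := by
    exact_mod_cast card_le_card (adjPairs_mono hFG (by simp))
  _ = ∑ v, (G.degree v : ℝ) := by exact_mod_cast card_adjPairs_product_univ G univ
  _ ≤ (1 + ε / 8) * (Fintype.card V * p * Fintype.card V) := by
    have huniv : β * Fintype.card V ≤ #(univ : Finset V) := by
      rw [card_univ]
      exact mul_le_of_le_one_left (Nat.cast_nonneg _) hβ
    simpa using hG.sum_degree univ huniv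
  _ ≤ 2 * (Fintype.card V * p * Fintype.card V) := by gcongr; linarith

theorem IsAdmissible.le_degree_of_mem (hH : IsAdmissible G H D ε) (hF : G ≤ F ⊔ H) (hv : v ∈ D) :
    2 ≤ F.degree v := by
  have hdeg : (G.degree v : ℝ) ≤ F.degree v + H.degree v := by
    exact_mod_cast degree_le_degree_add_degree hF v
  exact_mod_cast (by linarith [hH.low v hv] : (2 : ℝ) ≤ F.degree v)

theorem IsTypical.le_degree_of_notMem (hG : IsTypical G D p ε β c M) (hH : IsAdmissible G H D ε)
    (hF : G ≤ F ⊔ H) (hε : 0 < ε) (hv : v ∉ D) : Fintype.card V * p / 150 ≤ F.degree v := by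
  have hdeg : (G.degree v : ℝ) ≤ F.degree v + H.degree v := by
    exact_mod_cast degree_le_degree_add_degree hF v
  have hGv := not_lt.1 ((hG.low v).not.1 hv)
  have hpos : 0 ≤ ε * G.degree v := by positivity
  linarith [hH.high v hv]

theorem IsTypical.isPosaExpander (hG : IsTypical G D p ε β c M) (hΓ : Γ ≤ G) (hc : 0 ≤ c)
    (hlow : ∀ v ∈ D, 2 ≤ Γ.degree v) (hhigh : ∀ v ∉ D, 6 * c < Γ.degree v)
    (hjoin : ∀ U Z : Finset V, ⌈β * Fintype.card V⌉₊ ≤ #U → Fintype.card V ≤ 3 * #Z →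
      ∃ u ∈ U, ∃ z ∈ Z, Γ.Adj u z) :
    IsPosaExpander Γ ⌈β * Fintype.card V⌉₊ where
  join := hjoin
  expand U hU := by
    refine (hG.separated.mono hΓ).two_mul_card_le_card_extNbhd hlow ?_
    refine mul_card_le_card_extNbhd (c := c) (fun W hW => ?_) hc fun v hv => ?_
    · have hWU : (#W : ℝ) ≤ 6 * #U := by
        exact_mod_cast hW.trans (Nat.mul_le_mul_left 6 (card_le_card sdiff_subset))
      have hUβ := Nat.lt_ceil.1 hU
      refine le_trans ?_ (hG.sparse W (by linarith))
      exact_mod_cast card_le_card (adjPairs_mono hΓ Subset.rfl)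
    · exact_mod_cast hhigh v (mem_sdiff.1 hv).2

theorem IsTypical.exists_skeleton (hG : IsTypical G D p ε β c M) (hH : IsAdmissible G H D ε)
    (hFG : F ≤ G) (hF : G ≤ F ⊔ H) (hp : 0 < p) (hε : 0 < ε) (hε3 : ε ≤ 1 / 3) (hβ : 0 < β)
    (hβ1 : β ≤ 1) (hV : 0 < Fintype.card V) (hc : 0 ≤ c) (hk : 2 ≤ k) (hkc : 6 * c < k)
    (hkp : k ≤ Fintype.card V * p / 150) (ht : 16 * Fintype.card V ≤ ε * β * t) :
    ∃ Γ₀ ≤ F, edgeCount Γ₀ ≤ Fintype.card V * k + t ∧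
      ∀ Γ, Γ₀ ≤ Γ → Γ ≤ F → IsPosaExpander Γ ⌈β * Fintype.card V⌉₊ := by
  have : Nonempty V := Fintype.card_pos_iff.1 hV
  have hV' : (0 : ℝ) < Fintype.card V := by exact_mod_cast hV
  have hjoin : ∀ U Z : Finset V, β * Fintype.card V ≤ #U → Fintype.card V ≤ 3 * #Z →
      ε / 4 * (Fintype.card V * p * (β * Fintype.card V)) ≤ eBetween F U Z := by
    intro U Z hU hZ
    refine le_trans ?_ (hG.le_eBetween hH hF hp hε hε3 hβ hU (by exact_mod_cast hZ))
    gcongr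
  have hbig : ∀ U Z : Finset V, ⌈β * Fintype.card V⌉₊ ≤ #U → Fintype.card V ≤ 3 * #Z →
      ε * β / 8 * #(adjPairs F univ) ≤ eBetween F U Z := by
    intro U Z hU hZ
    have hle := mul_le_mul_of_nonneg_left (hG.card_adjPairs_univ_le hFG hp hε3 hβ1)
      (by positivity : 0 ≤ ε * β / 8)
    linarith [hjoin U Z (Nat.ceil_le.1 hU) hZ]
  have hFbot : F ≠ ⊥ := by
    rintro rfl
    have hpos := hjoin univ univ (by rw [card_univ]; exact mul_le_of_le_one_left hV'.le hβ1)
      (by rw [card_univ]; lia)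
    have hzero : eBetween (⊥ : SimpleGraph V) univ univ = 0 := by simp [eBetween]
    rw [hzero, Nat.cast_zero] at hpos
    exact hpos.not_gt (by positivity)
  obtain ⟨Γ₀, hΓ₀F, hΓ₀, hΓ₀Γ⟩ := _root_.exists_skeleton k hFbot (a := ε * β / 8) (t := t)
    (by nlinarith) hbig (by linarith)
  refine ⟨Γ₀, hΓ₀F, hΓ₀, fun Γ hΓ hΓF => ?_⟩
  obtain ⟨hdeg, hjoin⟩ := hΓ₀Γ Γ hΓ
  refine hG.isPosaExpander (hΓF.trans hFG) hc (fun v hv => ?_) (fun v hv => ?_) hjoin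
  · exact (le_min hk (hH.le_degree_of_mem hF hv)).trans (hdeg v)
  · refine hkc.trans_le ?_
    have hkF : (k : ℝ) ≤ F.degree v := hkp.trans (hG.le_degree_of_notMem hH hF hε hv)
    exact_mod_cast (le_min le_rfl (by exact_mod_cast hkF)).trans (hdeg v)

theorem add_one_le_of_two_mul_le_three_mul_ceil {N x : ℕ} (hβ : 1 ≤ β * N)
    (h : 2 * N ≤ 3 * ⌈β * N⌉₊ + 6 * x) : (1 / 3 - 2 * β) * N + 1 ≤ x := by
  have hceil := Nat.ceil_lt_add_one (zero_le_one.trans hβ)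
  have h' : 2 * (N : ℝ) ≤ 3 * ⌈β * N⌉₊ + 6 * x := by exact_mod_cast h
  linarith

theorem IsPosaExpander.card_closingPairs_ge [Nonempty V]
    (hΓ : IsPosaExpander Γ ⌈β * Fintype.card V⌉₊) (hl : ∃ l, IsLongestPathList Γ l)
    (hno : ∀ v, ∀ u ∈ endSet Γ v, ¬ Γ.Adj v u) (hβV : 1 ≤ β * Fintype.card V) :
    (1 / 3 - 2 * β) * Fintype.card V ≤ #(pathEnds Γ) ∧
      #(pathEnds Γ) * ((1 / 3 - 2 * β) * Fintype.card V) ≤ #(closingPairs Γ) := by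
  obtain ⟨l, hl⟩ := hl
  have hm : 0 < ⌈β * Fintype.card V⌉₊ := Nat.ceil_pos.2 (by linarith)
  have hends := add_one_le_of_two_mul_le_three_mul_ceil hβV (hΓ.card_pathEnds hm hl)
  refine ⟨by linarith, card_pathEnds_mul_le_card_closingPairs (fun v hv => ?_) hno⟩
  exact add_one_le_of_two_mul_le_three_mul_ceil hβV (hΓ.card_endSet hm (mem_pathEnds.1 hv))

theorem card_adjPairs_closingPairs_le (hF : G ≤ F ⊔ H) (hno : ∀ v, ∀ u ∈ endSet Γ v, ¬ F.Adj v u) :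
    #(adjPairs G (closingPairs Γ)) ≤ ∑ v ∈ pathEnds Γ, H.degree v := by
  have hnone : #(adjPairs F (closingPairs Γ)) = 0 := by
    refine card_eq_zero.2 (eq_empty_iff_forall_notMem.2 fun q hq => ?_)
    obtain ⟨hq, hFq⟩ := mem_adjPairs.1 hq
    exact hno q.1 q.2 (mem_closingPairs.1 hq).2.2 hFq
  have h := card_adjPairs_le_add_sum_degree hF (S := closingPairs Γ) (A := pathEnds Γ)
    fun q hq => mem_pathEnds.2 ⟨q.2, (mem_closingPairs.1 hq).2.2⟩
  rwa [hnone, zero_add] at h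

theorem IsTypical.isHamiltonian [DecidableEq V] (hG : IsTypical G D p ε β c M)
    (hH : IsAdmissible G H D ε) (hFG : F ≤ G) (hF : G ≤ F ⊔ H) (hp : 0 < p) (hε : 0 < ε)
    (hε3 : ε ≤ 1 / 3) (hβ : 0 < β) (hβε : β ≤ ε / 16) (hβV : 1 ≤ β * Fintype.card V) (hc : 0 ≤ c)
    (hk : 2 ≤ k) (hkc : 6 * c < k) (hkp : k ≤ Fintype.card V * p / 150)
    (ht : 16 * Fintype.card V ≤ ε * β * t) (hM : Fintype.card V * k + t + Fintype.card V ≤ M) :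
    F.IsHamiltonian := by
  by_contra hham
  have hN : (48 : ℝ) ≤ Fintype.card V := by nlinarith [(Fintype.card V).cast_nonneg' (α := ℝ)]
  have hN' : 48 ≤ Fintype.card V := by exact_mod_cast hN
  have : Nonempty V := Fintype.card_pos_iff.1 (by lia)
  obtain ⟨Γ₀, hΓ₀F, hΓ₀, hexp⟩ := hG.exists_skeleton hH hFG hF hp hε hε3 hβ (by linarith)
    (by lia) hc hk hkc hkp ht
  obtain ⟨Γ, hΓF, hΓexp, hΓ, hl, hno⟩ :=
    exists_saturated_of_not_isHamiltonian hΓ₀F hexp (by lia) hham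
  obtain ⟨hends, hpairs⟩ := hΓexp.card_closingPairs_ge hl (fun v u hu h => hno v u hu (hΓF h)) hβV
  have hβN : (7 : ℝ) / 24 * Fintype.card V ≤ (1 / 3 - 2 * β) * Fintype.card V := by
    gcongr
    linarith
  have hlarge : (Fintype.card V : ℝ) ^ 2 / 20 ≤ #(closingPairs Γ) := calc
    (Fintype.card V : ℝ) ^ 2 / 20 ≤
        7 / 24 * Fintype.card V * (7 / 24 * Fintype.card V) := by nlinarith
    _ ≤ #(pathEnds Γ) * ((1 / 3 - 2 * β) * Fintype.card V) := by gcongr; linarith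
    _ ≤ #(closingPairs Γ) := hpairs
  set X : ℝ := Fintype.card V * p * #(pathEnds Γ)
  have hX : 0 < X := mul_pos (by positivity) (by linarith)
  have hlt : 1 / 3 - ε / 2 < (1 - ε / 8) * (1 / 3 - 2 * β) := by nlinarith
  have hle : (1 - ε / 8) * (1 / 3 - 2 * β) * X ≤ (1 / 3 - ε / 2) * X := calc
    (1 - ε / 8) * (1 / 3 - 2 * β) * X
        = (1 - ε / 8) * (p * (#(pathEnds Γ) * ((1 / 3 - 2 * β) * Fintype.card V))) := by ring
    _ ≤ (1 - ε / 8) * (p * #(closingPairs Γ)) := by gcongr; linarith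
    _ ≤ #(adjPairs G (closingPairs Γ)) :=
      hG.adjPairs_closingPairs Γ (hΓF.trans hFG) (by lia) hlarge
    _ ≤ ∑ v ∈ pathEnds Γ, (H.degree v : ℝ) := by
      exact_mod_cast card_adjPairs_closingPairs_le hF hno
    _ ≤ (1 / 3 - ε / 2) * X := hG.sum_degree_le hH hp hε hε3 hβ (by nlinarith)
  exact (mul_lt_mul_of_pos_right hlt hX).not_ge hle

end Deterministic

section RandomGraph

variable {n : ℕ} {p : ℝ} {A B : SimpleGraph (Fin n) → Prop}

/-- The edges of the complete graph on `[n]`. -/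
noncomputable def potentialEdges (n : ℕ) : Finset (Sym2 (Fin n)) :=
  (⊤ : SimpleGraph (Fin n)).edgeFinset

theorem edgeFinset_subset_potentialEdges (G : SimpleGraph (Fin n)) :
    G.edgeFinset ⊆ potentialEdges n :=
  edgeFinset_mono le_top

theorem card_potentialEdges (n : ℕ) : #(potentialEdges n) = n.choose 2 := by
  have h := card_edgeFinset_top_eq_card_choose_two (V := Fin n)
  rw [Fintype.card_fin] at h
  rw [potentialEdges, ← h]

theorem sum_edgeFinset {M : Type*} [AddCommMonoid M] (f : Finset (Sym2 (Fin n)) → M) :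
    ∑ G : SimpleGraph (Fin n), f G.edgeFinset = ∑ T ∈ (potentialEdges n).powerset, f T := by
  refine sum_bij (fun G _ => G.edgeFinset)
    (fun G _ => mem_powerset.2 (edgeFinset_subset_potentialEdges G))
    (fun G _ G' _ h => edgeFinset_inj.1 h) (fun T hT => ?_) fun _ _ => rfl
  refine ⟨fromEdgeSet T, mem_univ _, coe_injective ?_⟩
  rw [coe_edgeFinset, edgeSet_fromEdgeSet, sdiff_eq_left, Set.disjoint_left]
  intro e he
  simpa [potentialEdges] using mem_powerset.1 hT he

theorem sum_gnpWeight_mul_prod (n : ℕ) (p : ℝ) (f g : Sym2 (Fin n) → ℝ) :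
    ∑ G : SimpleGraph (Fin n), gnpWeight n p G *
      ((∏ e ∈ G.edgeFinset, f e) * ∏ e ∈ potentialEdges n \ G.edgeFinset, g e) =
        ∏ e ∈ potentialEdges n, (p * f e + (1 - p) * g e) := by
  rw [prod_add, ← sum_edgeFinset fun T =>
    (∏ e ∈ T, p * f e) * ∏ e ∈ potentialEdges n \ T, (1 - p) * g e]
  refine sum_congr rfl fun G _ => ?_
  rw [prod_mul_distrib, prod_mul_distrib, prod_const, prod_const,
    card_sdiff_of_subset (edgeFinset_subset_potentialEdges G), card_potentialEdges, gnpWeight]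
  ring

theorem sum_gnpWeight (n : ℕ) (p : ℝ) : ∑ G : SimpleGraph (Fin n), gnpWeight n p G = 1 := by
  simpa using sum_gnpWeight_mul_prod n p (fun _ => 1) (fun _ => 1)

theorem gnpWeight_nonneg (hp : p ∈ unitInterval) (G : SimpleGraph (Fin n)) :
    0 ≤ gnpWeight n p G :=
  mul_nonneg (pow_nonneg hp.1 _) (pow_nonneg (sub_nonneg.2 hp.2) _)

theorem gnpProb_nonneg (hp : p ∈ unitInterval) (A : SimpleGraph (Fin n) → Prop) :
    0 ≤ gnpProb n p A :=
  sum_nonneg fun G _ => by split_ifs <;> simp [gnpWeight_nonneg hp]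

theorem gnpProb_add_gnpProb_not (n : ℕ) (p : ℝ) (A : SimpleGraph (Fin n) → Prop) :
    gnpProb n p A + gnpProb n p (fun G => ¬ A G) = 1 := by
  rw [← sum_gnpWeight n p, gnpProb, gnpProb, ← sum_add_distrib]
  refine sum_congr rfl fun G _ => ?_
  by_cases h : A G <;> simp [h]

theorem gnpProb_le_sum_mul (hp : p ∈ unitInterval) {X : SimpleGraph (Fin n) → ℝ}
    (hX : ∀ G, 0 ≤ X G) (hA : ∀ G, A G → 1 ≤ X G) :
    gnpProb n p A ≤ ∑ G, gnpWeight n p G * X G := by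
  refine sum_le_sum fun G _ => ?_
  split_ifs with h
  · exact le_mul_of_one_le_right (gnpWeight_nonneg hp G) (hA G h)
  · exact mul_nonneg (gnpWeight_nonneg hp G) (hX G)

theorem gnpProb_le_sum (hp : p ∈ unitInterval) {ι : Type*} {s : Finset ι}
    {B : ι → SimpleGraph (Fin n) → Prop} (h : ∀ G, A G → ∃ i ∈ s, B i G) :
    gnpProb n p A ≤ ∑ i ∈ s, gnpProb n p (B i) := by
  have hnonneg : ∀ G i, (0 : ℝ) ≤ if B i G then 1 else 0 := fun G i => by split_ifs <;> simp
  refine (gnpProb_le_sum_mul hp (X := fun G => ∑ i ∈ s, if B i G then 1 else 0)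
    (fun G => sum_nonneg fun i _ => hnonneg G i) fun G hG => ?_).trans_eq ?_
  · obtain ⟨i, hi, hB⟩ := h G hG
    simpa [hB] using single_le_sum (fun j _ => hnonneg G j) hi
  · simp only [gnpProb, mul_sum, mul_ite, mul_one, mul_zero]
    exact sum_comm

theorem gnpProb_mono (hp : p ∈ unitInterval) (h : ∀ G, A G → B G) :
    gnpProb n p A ≤ gnpProb n p B := by
  simpa using gnpProb_le_sum hp (s := {()}) (B := fun _ => B) fun G hG => ⟨(), by simp, h G hG⟩

theorem gnpProb_le_card_mul (hp : p ∈ unitInterval) {ι : Type*} [Fintype ι] {b : ℝ} (hb : 0 ≤ b)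
    {s : Finset ι} {B : ι → SimpleGraph (Fin n) → Prop} (h : ∀ G, A G → ∃ i ∈ s, B i G)
    (hB : ∀ i ∈ s, gnpProb n p (B i) ≤ b) : gnpProb n p A ≤ Fintype.card ι * b := by
  refine (gnpProb_le_sum hp h).trans ((sum_le_card_nsmul _ _ _ hB).trans ?_)
  rw [nsmul_eq_mul]
  gcongr
  exact card_le_univ s

theorem prod_mul_exp_add_le (hp : p ∈ unitInterval) {T : Finset (Sym2 (Fin n))}
    (hT : T ⊆ potentialEdges n) {c : Sym2 (Fin n) → ℝ} {l κ : ℝ} (hc : ∀ e ∈ T, c e = 0)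
    (hκ : ∀ e, κ * c e ≤ 1 - Real.exp (-(l * c e))) :
    ∏ e ∈ potentialEdges n, (p * Real.exp (-(l * c e)) + (1 - p) * if e ∈ T then 0 else 1) ≤
      p ^ #T * Real.exp (-(p * κ * ∑ e ∈ potentialEdges n, c e)) := by
  rw [← prod_sdiff hT, ← sum_sdiff hT, sum_eq_zero hc, add_zero, mul_comm (p ^ #T), mul_sum,
    ← sum_neg_distrib, Real.exp_sum, ← prod_const]
  refine mul_le_mul (prod_le_prod (fun e he => ?_) fun e he => ?_)
    (prod_congr rfl fun e he => ?_).le (prod_nonneg fun e he => ?_)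
    (prod_nonneg fun e _ => (Real.exp_pos _).le)
  · rw [if_neg (mem_sdiff.1 he).2, mul_one]
    exact add_nonneg (mul_nonneg hp.1 (Real.exp_pos _).le) (sub_nonneg.2 hp.2)
  · rw [if_neg (mem_sdiff.1 he).2, mul_one]
    have hexp := Real.add_one_le_exp (-(p * κ * c e))
    have hκe := mul_le_mul_of_nonneg_left (hκ e) hp.1
    linarith
  · simp [hc e he, he]
  · simp [hc e he, he, hp.1]

/-- An exponential-moment bound that also allows for the presence of a prescribed set `T` of edges:
the indicator of `T ⊆ E(G)` is a product over the edges absent from `G`. -/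
theorem gnpProb_le_exp (hp : p ∈ unitInterval) {T : Finset (Sym2 (Fin n))}
    {c : Sym2 (Fin n) → ℝ} {l κ a : ℝ} (hc : ∀ e ∈ T, c e = 0)
    (hκ : ∀ e, κ * c e ≤ 1 - Real.exp (-(l * c e)))
    (hA : ∀ G, A G → T ⊆ G.edgeFinset ∧ l * ∑ e ∈ G.edgeFinset, c e ≤ l * a) :
    gnpProb n p A ≤ p ^ #T * Real.exp (l * a - p * κ * ∑ e ∈ potentialEdges n, c e) := by
  by_cases hT : T ⊆ potentialEdges n
  swap
  · rw [gnpProb, sum_eq_zero fun G _ => if_neg fun hG =>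
      hT ((hA G hG).1.trans (edgeFinset_subset_potentialEdges G))]
    exact mul_nonneg (pow_nonneg hp.1 _) (Real.exp_pos _).le
  set X : SimpleGraph (Fin n) → ℝ := fun G => (∏ e ∈ G.edgeFinset, Real.exp (-(l * c e))) *
    ∏ e ∈ potentialEdges n \ G.edgeFinset, if e ∈ T then 0 else 1 with hX
  have hX0 : ∀ G, 0 ≤ X G := fun G =>
    mul_nonneg (prod_nonneg fun e _ => (Real.exp_pos _).le)
      (prod_nonneg fun e _ => by split_ifs <;> simp)
  have hX1 : ∀ G, A G → 1 ≤ Real.exp (l * a) * X G := by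
    intro G hG
    obtain ⟨hTG, hle⟩ := hA G hG
    have hind : ∏ e ∈ potentialEdges n \ G.edgeFinset, (if e ∈ T then (0 : ℝ) else 1) = 1 :=
      prod_eq_one fun e he => if_neg fun h => (mem_sdiff.1 he).2 (hTG h)
    rw [hX]
    simp only [hind, ← Real.exp_sum, sum_neg_distrib, ← mul_sum, mul_one, ← Real.exp_add]
    exact Real.one_le_exp (by linarith)
  calc gnpProb n p A ≤ ∑ G, gnpWeight n p G * (Real.exp (l * a) * X G) :=
        gnpProb_le_sum_mul hp (fun G => mul_nonneg (Real.exp_pos _).le (hX0 G)) hX1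
    _ = Real.exp (l * a) * ∑ G, gnpWeight n p G * X G := by
        rw [mul_sum]
        exact sum_congr rfl fun G _ => mul_left_comm _ _ _
    _ ≤ Real.exp (l * a) * (p ^ #T * Real.exp (-(p * κ * ∑ e ∈ potentialEdges n, c e))) := by
        rw [sum_gnpWeight_mul_prod]
        gcongr
        exact prod_mul_exp_add_le hp hT hc hκ
    _ = p ^ #T * Real.exp (l * a - p * κ * ∑ e ∈ potentialEdges n, c e) := by
        rw [mul_left_comm, ← Real.exp_add, sub_eq_add_neg]

/-- The number of pairs in `S` whose underlying unordered pair is `e`. -/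
noncomputable def pairMult {V : Type*} (S : Finset (V × V)) (e : Sym2 V) : ℕ :=
  #{q ∈ S | s(q.1, q.2) = e}

theorem pairMult_eq_zero {V : Type*} {S : Finset (V × V)} {e : Sym2 V} :
    pairMult S e = 0 ↔ ∀ q ∈ S, s(q.1, q.2) ≠ e := by
  rw [pairMult, card_eq_zero, filter_eq_empty_iff]

theorem pairMult_le_two {V : Type*} (S : Finset (V × V)) (e : Sym2 V) : pairMult S e ≤ 2 := by
  induction e using Sym2.ind with
  | _ a b =>
  refine (card_le_card fun q hq => ?_).trans (card_le_two (a := (a, b)) (b := (b, a)))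
  simpa [Prod.ext_iff] using (mem_filter.1 hq).2

theorem sum_pairMult {V : Type*} (G : SimpleGraph V) [Fintype G.edgeSet]
    (S : Finset (V × V)) : ∑ e ∈ G.edgeFinset, (pairMult S e : ℝ) = #(adjPairs G S) := by
  rw [card_eq_sum_card_fiberwise (f := fun q => s(q.1, q.2)) (t := G.edgeFinset)
    fun q hq => mem_edgeFinset.2 (mem_adjPairs.1 hq).2, Nat.cast_sum]
  refine sum_congr rfl fun e he => ?_
  refine congrArg (fun s => (#s : ℝ)) (Finset.ext fun q => ?_)
  simp only [mem_filter, mem_adjPairs]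
  refine ⟨fun h => ⟨⟨h.1, ?_⟩, h.2⟩, fun h => ⟨h.1.1, h.2⟩⟩
  rwa [← h.2, mem_edgeFinset, mem_edgeSet] at he

theorem card_adjPairs_top_product_add {V : Type*} [DecidableEq V] (U Z : Finset V) :
    #(adjPairs ⊤ (U ×ˢ Z)) + #(U ∩ Z) = #U * #Z := by
  rw [← card_product, ← card_filter_add_card_filter_not (s := U ×ˢ Z) fun q => q.1 ≠ q.2]
  refine congrArg₂ (· + ·) (congrArg card (Finset.ext fun q => mem_adjPairs.trans ?_)) ?_
  · rw [mem_filter, top_adj]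
  · refine card_nbij' (fun v => (v, v)) Prod.fst (fun v hv => ?_) (fun q hq => ?_)
      (fun v _ => rfl) fun q hq => ?_
    · simpa using hv
    · have h : (q.1 ∈ U ∧ q.2 ∈ Z) ∧ q.1 = q.2 := by simpa using hq
      exact mem_inter.2 ⟨h.1.1, h.2 ▸ h.1.2⟩
    · have h : (q.1 ∈ U ∧ q.2 ∈ Z) ∧ q.1 = q.2 := by simpa using hq
      exact Prod.ext rfl h.2

theorem one_sub_exp_div_mul_le {x k : ℝ} (l : ℝ) (hk : 0 < k) (hx : 0 ≤ x) (hxk : x ≤ k) :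
    (1 - Real.exp (-(l * k))) / k * x ≤ 1 - Real.exp (-(l * x)) := by
  have hconv := convexOn_exp.2 (Set.mem_univ 0) (Set.mem_univ (-(l * k)))
    (sub_nonneg.2 ((div_le_one hk).2 hxk)) (div_nonneg hx hk.le) (sub_add_cancel 1 (x / k))
  have hcomb : (1 - x / k) • (0 : ℝ) + (x / k) • (-(l * k)) = -(l * x) := by
    simp only [smul_eq_mul]
    field_simp
    ring
  rw [hcomb, Real.exp_zero] at hconv
  simp only [smul_eq_mul] at hconv
  calc (1 - Real.exp (-(l * k))) / k * x = x / k * (1 - Real.exp (-(l * k))) := by ring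
    _ ≤ 1 - Real.exp (-(l * x)) := by linarith

theorem gnpProb_adjPairs_le (hp : p ∈ unitInterval) {T : Finset (Sym2 (Fin n))}
    {S : Finset (Fin n × Fin n)} (hST : ∀ q ∈ S, s(q.1, q.2) ∉ T)
    {k : ℕ} (hk : 0 < k) (hS : ∀ e, pairMult S e ≤ k) {l a : ℝ}
    (hA : ∀ G, A G → T ⊆ G.edgeFinset ∧ l * #(adjPairs G S) ≤ l * a) :
    gnpProb n p A ≤
      p ^ #T * Real.exp (l * a - p * ((1 - Real.exp (-(l * k))) / k) * #(adjPairs ⊤ S)) := by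
  rw [← sum_pairMult]
  refine gnpProb_le_exp hp (fun e he => ?_) (fun e => ?_) fun G hG => ?_
  · rw [Nat.cast_eq_zero, pairMult_eq_zero]
    exact fun q hq h => hST q hq (h ▸ he)
  · exact one_sub_exp_div_mul_le l (by positivity) (by positivity) (by exact_mod_cast hS e)
  · rw [sum_pairMult]
    exact hA G hG

theorem gnpProb_adjPairs_le_one_sub_mul (hp : p ∈ unitInterval) {T : Finset (Sym2 (Fin n))}
    {S : Finset (Fin n × Fin n)} (hST : ∀ q ∈ S, s(q.1, q.2) ∉ T)
    {η : ℝ} (hη : 0 ≤ η) (hη1 : η ≤ 1)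
    (hA : ∀ G, A G → T ⊆ G.edgeFinset ∧
      (#(adjPairs G S) : ℝ) ≤ (1 - η) * (p * #(adjPairs ⊤ S))) :
    gnpProb n p A ≤ p ^ #T * Real.exp (-(p * #(adjPairs ⊤ S) * (η ^ 2 / 8))) := by
  have hp0 : 0 ≤ p := hp.1
  refine (gnpProb_adjPairs_le hp hST two_pos (pairMult_le_two S) (l := η / 4) fun G hG =>
    ⟨(hA G hG).1, mul_le_mul_of_nonneg_left (hA G hG).2 (by positivity)⟩).trans ?_
  gcongr
  have hexp := (abs_le.1 <| Real.abs_exp_sub_one_sub_id_le (x := -(η / 4 * (2 : ℕ))) <|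
    abs_le.2 <| by push_cast; constructor <;> linarith).2
  have hκ : η / 4 - η ^ 2 / 8 ≤ (1 - Real.exp (-(η / 4 * (2 : ℕ)))) / (2 : ℕ) := by
    push_cast at hexp ⊢
    linarith
  have hmul := mul_le_mul_of_nonneg_left hκ (by positivity : 0 ≤ p * #(adjPairs ⊤ S))
  linarith

theorem gnpProb_le_adjPairs (hp : p ∈ unitInterval) {S : Finset (Fin n × Fin n)} {l a : ℝ}
    (hl : 0 ≤ l) (hA : ∀ G, A G → a ≤ #(adjPairs G S)) :
    gnpProb n p A ≤
      Real.exp (p * #(adjPairs ⊤ S) * ((Real.exp (2 * l) - 1) / 2) - l * a) := by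
  refine (gnpProb_adjPairs_le hp (T := ∅) (fun _ _ => notMem_empty _) two_pos
    (pairMult_le_two S) (l := -l) (a := a) fun G hG => ⟨empty_subset _, ?_⟩).trans_eq ?_
  · linarith [mul_le_mul_of_nonneg_left (hA G hG) hl]
  · rw [card_empty, pow_zero, one_mul]
    congr 1
    push_cast
    ring_nf

theorem gnpProb_one_add_mul_le_adjPairs (hp : p ∈ unitInterval) {S : Finset (Fin n × Fin n)}
    {η : ℝ} (hη : 0 ≤ η) (hη1 : η ≤ 1)
    (hA : ∀ G, A G → (1 + η) * (p * #(adjPairs ⊤ S)) ≤ #(adjPairs G S)) :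
    gnpProb n p A ≤ Real.exp (-(p * #(adjPairs ⊤ S) * (η ^ 2 / 8))) := by
  have hp0 : 0 ≤ p := hp.1
  refine (gnpProb_le_adjPairs hp (l := η / 4) (by positivity) hA).trans ?_
  gcongr
  have hexp := (abs_le.1 <| Real.abs_exp_sub_one_sub_id_le (x := 2 * (η / 4)) <|
    abs_le.2 <| by constructor <;> linarith).2
  have hκ : (Real.exp (2 * (η / 4)) - 1) / 2 ≤ η / 4 + η ^ 2 / 8 := by linarith
  have hmul := mul_le_mul_of_nonneg_left hκ (by positivity : 0 ≤ p * #(adjPairs ⊤ S))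
  linarith

end RandomGraph

section WithHighProbability

variable {p : ℕ → ℝ} {A B : ∀ n, SimpleGraph (Fin n) → Prop}

theorem whp_iff_tendsto_gnpProb_not :
    WHP p A ↔ Tendsto (fun n => gnpProb n (p n) fun G => ¬ A n G) atTop (nhds 0) := by
  have h1 : ∀ n, gnpProb n (p n) (A n) = 1 - gnpProb n (p n) (fun G => ¬ A n G) := fun n =>
    eq_sub_of_add_eq (gnpProb_add_gnpProb_not n (p n) (A n))
  have h0 : ∀ n, gnpProb n (p n) (fun G => ¬ A n G) = 1 - gnpProb n (p n) (A n) := fun n =>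
    eq_sub_of_add_eq' (gnpProb_add_gnpProb_not n (p n) (A n))
  refine ⟨fun h => ?_, fun h => ?_⟩
  · simpa only [h0, sub_self] using h.const_sub 1
  · simpa only [WHP, h1, sub_zero] using h.const_sub 1

theorem WHP.of_gnpProb_not_le (hp : ∀ n, p n ∈ unitInterval) {b : ℕ → ℝ}
    (hb : Tendsto b atTop (nhds 0))
    (h : ∀ᶠ n in atTop, gnpProb n (p n) (fun G => ¬ A n G) ≤ b n) : WHP p A :=
  whp_iff_tendsto_gnpProb_not.2 <| tendsto_of_tendsto_of_tendsto_of_le_of_le' tendsto_const_nhds hb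
    (Eventually.of_forall fun n => gnpProb_nonneg (hp n) _) h

theorem WHP.mono (hp : ∀ n, p n ∈ unitInterval) (hA : WHP p A)
    (h : ∀ᶠ n in atTop, ∀ G, A n G → B n G) : WHP p B :=
  .of_gnpProb_not_le hp (whp_iff_tendsto_gnpProb_not.1 hA) <| h.mono fun n hn =>
    gnpProb_mono (hp n) fun G => mt (hn G)

theorem WHP.forall_mem (hp : ∀ n, p n ∈ unitInterval) {ι : Type*} {s : Finset ι}
    {A : ι → ∀ n, SimpleGraph (Fin n) → Prop} (h : ∀ i ∈ s, WHP p (A i)) :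
    WHP p fun n G => ∀ i ∈ s, A i n G := by
  have hsum := tendsto_finsetSum s fun i hi => whp_iff_tendsto_gnpProb_not.1 (h i hi)
  rw [sum_const_zero] at hsum
  refine .of_gnpProb_not_le hp hsum (Eventually.of_forall fun n => gnpProb_le_sum (hp n) ?_)
  intro G hG
  push Not at hG
  exact hG

theorem WHP.and (hp : ∀ n, p n ∈ unitInterval) (hA : WHP p A) (hB : WHP p B) :
    WHP p fun n G => A n G ∧ B n G := by
  have h := WHP.forall_mem hp (s := univ) (A := fun b : Bool => bif b then A else B)
    (Bool.forall_bool.2 ⟨fun _ => hB, fun _ => hA⟩)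
  exact h.mono hp (Eventually.of_forall fun n G hG => ⟨hG true (mem_univ _), hG false (mem_univ _)⟩)

theorem WHP.of_card_le_exp (hp : ∀ n, p n ∈ unitInterval)
    (hd : Tendsto (fun n => n * p n) atTop atTop) {ι : ℕ → Type*} [∀ n, Fintype (ι n)] {C c : ℝ}
    (hC : ∀ n, (Fintype.card (ι n) : ℝ) ≤ Real.exp (C * n)) (hc : 0 < c)
    {s : ∀ n, Finset (ι n)} {B : ∀ n, ι n → SimpleGraph (Fin n) → Prop}
    (hA : ∀ᶠ n in atTop, ∀ G, ¬ A n G → ∃ i ∈ s n, B n i G)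
    (hB : ∀ᶠ n in atTop, ∀ i ∈ s n, gnpProb n (p n) (B n i) ≤ Real.exp (-(c * (n * p n * n)))) :
    WHP p A := by
  refine .of_gnpProb_not_le hp
    (Real.tendsto_exp_neg_atTop_nhds_zero.comp tendsto_natCast_atTop_atTop) ?_
  filter_upwards [hA, hB, hd.eventually_ge_atTop ((C + 1) / c)] with n hAn hBn hdn
  rw [div_le_iff₀ hc] at hdn
  calc gnpProb n (p n) (fun G => ¬ A n G)
      ≤ Fintype.card (ι n) * Real.exp (-(c * (n * p n * n))) :=
        gnpProb_le_card_mul (hp n) (Real.exp_pos _).le hAn hBn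
    _ ≤ Real.exp (C * n) * Real.exp (-(c * (n * p n * n))) := by
        gcongr
        exact hC n
    _ ≤ Real.exp (-n) := by
        rw [← Real.exp_add]
        gcongr
        linarith [mul_le_mul_of_nonneg_right hdn n.cast_nonneg]

theorem card_finset_fin_le_exp (n : ℕ) :
    (Fintype.card (Finset (Fin n)) : ℝ) ≤ Real.exp (1 * n) := by
  rw [Fintype.card_finset, Fintype.card_fin, mul_comm, Real.exp_nat_mul]
  push_cast
  gcongr
  linarith [Real.add_one_le_exp 1]

end WithHighProbability

section QuasiRandomness

variable {p : ℕ → ℝ} {η ν : ℝ}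

theorem whp_sum_degree_le (hp : ∀ n, p n ∈ unitInterval)
    (hd : Tendsto (fun n => n * p n) atTop atTop) (hη : 0 < η) (hη1 : η ≤ 1) (hν : 0 < ν) :
    WHP p fun n G => ∀ A : Finset (Fin n), ν * n ≤ #A →
      ∑ v ∈ A, (G.degree v : ℝ) ≤ (1 + η) * (n * p n * #A) := by
  have htop (n : ℕ) (A : Finset (Fin n)) : (#(adjPairs ⊤ (A ×ˢ univ)) + #A : ℝ) = n * #A := by
    have h := card_adjPairs_top_product_add A univ
    rw [inter_univ, card_univ, Fintype.card_fin, mul_comm] at h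
    exact_mod_cast h
  refine .of_card_le_exp hp hd card_finset_fin_le_exp (by positivity : 0 < ν * η ^ 2 / 16)
    (s := fun n => {A | ν * n ≤ #A})
    (B := fun n A G => (1 + η) * (p n * #(adjPairs ⊤ (A ×ˢ univ))) ≤ #(adjPairs G (A ×ˢ univ)))
    ?_ ?_
  · filter_upwards with n G hG
    push Not at hG
    obtain ⟨A, hA, hlt⟩ := hG
    have hcard : (#(adjPairs ⊤ (A ×ˢ univ)) : ℝ) ≤ n * #A := by linarith [htop n A]
    refine ⟨A, by simpa using hA, ?_⟩
    calc (1 + η) * (p n * #(adjPairs ⊤ (A ×ˢ univ))) ≤ (1 + η) * (p n * (n * #A)) := by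
          have := (hp n).1
          gcongr
      _ = (1 + η) * (n * p n * #A) := by ring
      _ ≤ #(adjPairs G (A ×ˢ univ)) := by
          rw [card_adjPairs_product_univ, Nat.cast_sum]
          exact hlt.le
  · filter_upwards [eventually_ge_atTop 2] with n hn A hA
    refine (gnpProb_one_add_mul_le_adjPairs (hp n) hη.le hη1 fun G hG => hG).trans ?_
    have hn' : (2 : ℝ) ≤ n := by exact_mod_cast hn
    have hA' : ν * n ≤ #A := by simpa using hA
    have hcard : ν * n * n / 2 ≤ #(adjPairs ⊤ (A ×ˢ (univ : Finset (Fin n)))) := by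
      linarith [htop n A, mul_le_mul_of_nonneg_right hA' n.cast_nonneg,
        mul_le_mul_of_nonneg_left hn' (Nat.cast_nonneg #A)]
    have hp0 := (hp n).1
    calc Real.exp (-(p n * #(adjPairs ⊤ (A ×ˢ (univ : Finset (Fin n)))) * (η ^ 2 / 8)))
        ≤ Real.exp (-(p n * (ν * n * n / 2) * (η ^ 2 / 8))) := by gcongr
      _ = Real.exp (-(ν * η ^ 2 / 16 * (n * p n * n))) := by ring_nf

theorem one_sub_half_mul_le_card_adjPairs_top {V : Type*} {U Z : Finset V} (hZ : 2 ≤ η * #Z) :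
    (1 - η / 2) * (#U * #Z) ≤ #(adjPairs ⊤ (U ×ˢ Z)) := by
  have hUZ : (#(U ∩ Z) : ℝ) ≤ #U := by exact_mod_cast card_le_card inter_subset_left
  have hadd : (#(adjPairs ⊤ (U ×ˢ Z)) + #(U ∩ Z) : ℝ) = #U * #Z := by
    exact_mod_cast card_adjPairs_top_product_add U Z
  linarith [mul_le_mul_of_nonneg_left hZ (Nat.cast_nonneg #U)]

theorem whp_eBetween_ge (hp : ∀ n, p n ∈ unitInterval)
    (hd : Tendsto (fun n => n * p n) atTop atTop) (hη : 0 < η) (hη1 : η ≤ 1) (hν : 0 < ν) :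
    WHP p fun n G => ∀ U Z : Finset (Fin n), ν * n ≤ #U → ν * n ≤ #Z →
      (1 - η) * (p n * (#U * #Z)) ≤ eBetween G U Z := by
  have htop : ∀ᶠ n : ℕ in atTop, ∀ U Z : Finset (Fin n), ν * n ≤ #Z →
      (1 - η / 2) * (#U * #Z) ≤ #(adjPairs ⊤ (U ×ˢ Z)) := by
    filter_upwards [tendsto_natCast_atTop_atTop.eventually_ge_atTop (2 / (η * ν))] with n hn U Z hZ
    rw [div_le_iff₀ (by positivity)] at hn
    exact one_sub_half_mul_le_card_adjPairs_top
      (by linarith [mul_le_mul_of_nonneg_left hZ hη.le])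
  refine .of_card_le_exp hp hd (ι := fun n => Finset (Fin n) × Finset (Fin n)) (C := 2)
    (fun n => ?_) (by positivity : 0 < ν ^ 2 * η ^ 2 / 64)
    (s := fun n => {A | ν * n ≤ #A.1 ∧ ν * n ≤ #A.2})
    (B := fun n A G => ∅ ⊆ G.edgeFinset ∧
      (#(adjPairs G (A.1 ×ˢ A.2)) : ℝ) ≤ (1 - η / 2) * (p n * #(adjPairs ⊤ (A.1 ×ˢ A.2)))) ?_ ?_
  · rw [Fintype.card_prod, Nat.cast_mul, two_mul, Real.exp_add, ← one_mul (n : ℝ)]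
    exact mul_self_le_mul_self (Nat.cast_nonneg _) (card_finset_fin_le_exp n)
  · filter_upwards [htop] with n hn G hG
    push Not at hG
    obtain ⟨U, Z, hU, hZ, hlt⟩ := hG
    refine ⟨(U, Z), by simpa using ⟨hU, hZ⟩, empty_subset _, hlt.le.trans ?_⟩
    have hmul := mul_le_mul_of_nonneg_left (hn U Z hZ)
      (mul_nonneg (by linarith : 0 ≤ 1 - η / 2) (hp n).1)
    have hsq : 0 ≤ p n * (#U * #Z) * η ^ 2 := mul_nonneg (mul_nonneg (hp n).1 (by positivity))
      (sq_nonneg η)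
    dsimp only
    linarith
  · filter_upwards [htop] with n hn A hA
    obtain ⟨hU, hZ⟩ : ν * n ≤ #A.1 ∧ ν * n ≤ #A.2 := by simpa using hA
    refine (gnpProb_adjPairs_le_one_sub_mul (hp n) (fun _ _ => notMem_empty _)
      (by positivity : 0 ≤ η / 2) (by linarith) fun G hG => hG).trans ?_
    have hp0 := (hp n).1
    have hcard : (ν * n) * (ν * n) / 2 ≤ #(adjPairs ⊤ (A.1 ×ˢ A.2)) := by
      have hUZ : (ν * n) * (ν * n) ≤ #A.1 * #A.2 := by gcongr
      have hη2 : 0 ≤ (1 - η) * (#A.1 * #A.2 : ℝ) := mul_nonneg (by linarith) (by positivity)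
      linarith [hn A.1 A.2 hZ]
    rw [card_empty, pow_zero, one_mul]
    calc Real.exp (-(p n * #(adjPairs ⊤ (A.1 ×ˢ A.2)) * ((η / 2) ^ 2 / 8)))
        ≤ Real.exp (-(p n * ((ν * n) * (ν * n) / 2) * ((η / 2) ^ 2 / 8))) := by gcongr
      _ = Real.exp (-(ν ^ 2 * η ^ 2 / 64 * (n * p n * n))) := by ring_nf

theorem sum_pow_card_edgeFinset_le (n : ℕ) {x : ℝ} (hx : 0 ≤ x) :
    ∑ Γ : SimpleGraph (Fin n), x ^ #Γ.edgeFinset ≤ Real.exp (n ^ 2 / 2 * x) := by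
  have hchoose : (n.choose 2 : ℝ) ≤ n ^ 2 / 2 := by exact_mod_cast Nat.choose_le_pow_div 2 n
  calc ∑ Γ : SimpleGraph (Fin n), x ^ #Γ.edgeFinset
      = ∑ T ∈ (potentialEdges n).powerset, x ^ #T := sum_edgeFinset fun T => x ^ #T
    _ = (x + 1) ^ n.choose 2 := by
        rw [← card_potentialEdges, ← sum_pow_mul_eq_add_pow]
        simp only [one_pow, mul_one]
    _ ≤ Real.exp x ^ n.choose 2 := by
        gcongr
        exact Real.add_one_le_exp x
    _ ≤ Real.exp (n ^ 2 / 2 * x) := by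
        rw [← Real.exp_nat_mul]
        gcongr

end QuasiRandomness

section SubgraphUnionBound

theorem gnpProb_le_and_card_adjPairs_lt_le {n : ℕ} {p : ℝ} (hp : p ∈ unitInterval)
    {Γ : SimpleGraph (Fin n)} {S : Finset (Fin n × Fin n)}
    (hS : ∀ q ∈ S, q.1 ≠ q.2 ∧ ¬ Γ.Adj q.1 q.2) {η c κ : ℝ} (hη : 0 ≤ η) (hη1 : η ≤ 1)
    (hκ : 0 < κ) (hc : κ = c * (η ^ 2 / 8))
    (hΓ : (#Γ.edgeFinset : ℝ) ≤ κ ^ 2 / 4 * (n * p * n)) (hcS : c * n ^ 2 ≤ #S) :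
    gnpProb n p (fun G => Γ ≤ G ∧ (#(adjPairs G S) : ℝ) < (1 - η) * (p * #S)) ≤
      (p * Real.exp (-κ⁻¹)) ^ #Γ.edgeFinset * Real.exp (-(3 / 4 * κ * (n * p * n))) := by
  have hp0 := hp.1
  have htop : adjPairs ⊤ S = S := Finset.ext fun q =>
    mem_adjPairs.trans (and_iff_left_of_imp fun hq => (hS q hq).1)
  refine (gnpProb_adjPairs_le_one_sub_mul hp (T := Γ.edgeFinset) (S := S)
    (fun q hq => by rw [mem_edgeFinset]; exact (hS q hq).2) hη hη1 fun G hG =>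
      ⟨edgeFinset_mono hG.1, by rw [htop]; exact hG.2.le⟩).trans ?_
  have hL : κ⁻¹ * #Γ.edgeFinset ≤ κ / 4 * (n * p * n) := by
    rw [inv_mul_le_iff₀ hκ]
    linarith
  have hpS : κ * (n * p * n) ≤ p * #S * (η ^ 2 / 8) :=
    calc κ * (n * p * n) = p * (c * n ^ 2) * (η ^ 2 / 8) := by rw [hc]; ring
      _ ≤ p * #S * (η ^ 2 / 8) := by gcongr
  rw [htop, mul_pow, ← Real.exp_nat_mul, mul_assoc (p ^ _), ← Real.exp_add]
  gcongr
  linarith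

theorem gnpProb_exists_sparse_le {n : ℕ} {p : ℝ} (hp : p ∈ unitInterval)
    {S : SimpleGraph (Fin n) → Finset (Fin n × Fin n)}
    (hS : ∀ Γ, ∀ q ∈ S Γ, q.1 ≠ q.2 ∧ ¬ Γ.Adj q.1 q.2) {η c κ : ℝ} (hη : 0 ≤ η) (hη1 : η ≤ 1)
    (hκ : 0 < κ) (hc : κ = c * (η ^ 2 / 8)) :
    gnpProb n p (fun G => ∃ Γ ≤ G, (#Γ.edgeFinset : ℝ) ≤ κ ^ 2 / 4 * (n * p * n) ∧
      c * n ^ 2 ≤ #(S Γ) ∧ (#(adjPairs G (S Γ)) : ℝ) < (1 - η) * (p * #(S Γ))) ≤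
      Real.exp (-(κ / 4 * (n * p * n))) := by
  have hp0 := hp.1
  set s : Finset (SimpleGraph (Fin n)) :=
    {Γ | (#Γ.edgeFinset : ℝ) ≤ κ ^ 2 / 4 * (n * p * n) ∧ c * n ^ 2 ≤ #(S Γ)}
  have hexp : Real.exp (-κ⁻¹) ≤ κ := by
    rw [Real.exp_neg, inv_le_comm₀ (Real.exp_pos _) hκ]
    linarith [Real.add_one_le_exp κ⁻¹]
  have hx : 0 ≤ p * Real.exp (-κ⁻¹) := by positivity
  calc gnpProb n p _
      ≤ ∑ Γ ∈ s, gnpProb n p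
          (fun G => Γ ≤ G ∧ (#(adjPairs G (S Γ)) : ℝ) < (1 - η) * (p * #(S Γ))) := by
        refine gnpProb_le_sum hp fun G ⟨Γ, hΓ, hM, hcS, hlt⟩ => ⟨Γ, ?_, hΓ, hlt⟩
        exact mem_filter.2 ⟨mem_univ _, hM, hcS⟩
    _ ≤ ∑ Γ ∈ s, (p * Real.exp (-κ⁻¹)) ^ #Γ.edgeFinset *
          Real.exp (-(3 / 4 * κ * (n * p * n))) := by
        refine sum_le_sum fun Γ hΓ => ?_
        obtain ⟨hM, hcS⟩ := (mem_filter.1 hΓ).2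
        exact gnpProb_le_and_card_adjPairs_lt_le hp (hS Γ) hη hη1 hκ hc hM hcS
    _ ≤ (∑ Γ : SimpleGraph (Fin n), (p * Real.exp (-κ⁻¹)) ^ #Γ.edgeFinset) *
          Real.exp (-(3 / 4 * κ * (n * p * n))) := by
        rw [← sum_mul]
        gcongr
        exact subset_univ s
    _ ≤ Real.exp (n ^ 2 / 2 * (p * κ)) * Real.exp (-(3 / 4 * κ * (n * p * n))) := by
        gcongr
        refine (sum_pow_card_edgeFinset_le n hx).trans ?_
        gcongr
    _ = Real.exp (-(κ / 4 * (n * p * n))) := by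
        rw [← Real.exp_add]
        ring_nf

theorem exists_whp_forall_sparse {p : ℕ → ℝ} (hp : ∀ n, p n ∈ unitInterval)
    (hd : Tendsto (fun n => n * p n) atTop atTop) {η c : ℝ} (hη : 0 < η) (hη1 : η ≤ 1)
    (hc : 0 < c) :
    ∃ θ > 0, ∀ S : ∀ n, SimpleGraph (Fin n) → Finset (Fin n × Fin n),
      (∀ n Γ, ∀ q ∈ S n Γ, q.1 ≠ q.2 ∧ ¬ Γ.Adj q.1 q.2) →
      WHP p fun n G => ∀ Γ ≤ G, (edgeCount Γ : ℝ) ≤ θ * (n * p n * n) → c * n ^ 2 ≤ #(S n Γ) →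
        (1 - η) * (p n * #(S n Γ)) ≤ #(adjPairs G (S n Γ)) := by
  refine ⟨(c * (η ^ 2 / 8)) ^ 2 / 4, by positivity, fun S hS => ?_⟩
  have hκ : 0 < c * (η ^ 2 / 8) := by positivity
  refine .of_gnpProb_not_le hp (b := fun n => Real.exp (-(c * (η ^ 2 / 8) / 4 * (n * p n * n))))
    (Real.tendsto_exp_neg_atTop_nhds_zero.comp ?_) (Eventually.of_forall fun n => ?_)
  · exact (hd.atTop_mul_atTop₀ tendsto_natCast_atTop_atTop).const_mul_atTop (by positivity)
  · refine (gnpProb_mono (hp n) fun G hG => ?_).trans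
      (gnpProb_exists_sparse_le (hp n) (hS n) hη.le hη1 hκ rfl)
    push Not at hG
    simpa only [edgeCount_eq_ncard, ← coe_edgeFinset, Set.ncard_coe_finset] using hG

end SubgraphUnionBound

section LocalSparsity

theorem gnpProb_lt_eBetween_self_le {n : ℕ} {p : ℝ} (hp : p ∈ unitInterval) {γ μ : ℝ} (hγ : 0 < γ)
    (hμ : μ * Real.exp (4 / γ + 1) ≤ γ) {W : Finset (Fin n)} (hW : W.Nonempty)
    (hWμ : #W ≤ μ * n) :
    gnpProb n p (fun G => γ * (n * p) * #W < eBetween G W W) ≤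
      Real.exp (-(n * p)) ^ #W * Real.exp (-(n * p)) := by
  have hp0 := hp.1
  have hl : 2 * (2 / γ + 1 / 2) = 4 / γ + 1 := by ring
  have hlγ : (2 / γ + 1 / 2) * γ = 2 + γ / 2 := by field_simp
  have hW1 : (1 : ℝ) ≤ #W := by exact_mod_cast hW.card_pos
  have hexp : 0 ≤ Real.exp (4 / γ + 1) - 1 := by
    linarith [Real.one_le_exp (by positivity : 0 ≤ 4 / γ + 1)]
  have htop : (#(adjPairs ⊤ (W ×ˢ W)) : ℝ) ≤ #W * #W := by
    exact_mod_cast (Nat.le_add_right _ _).trans_eq (card_adjPairs_top_product_add W W)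
  have hmean : p * #(adjPairs ⊤ (W ×ˢ W)) * ((Real.exp (4 / γ + 1) - 1) / 2) ≤
      n * p * #W * (γ / 2) :=
    calc p * #(adjPairs ⊤ (W ×ˢ W)) * ((Real.exp (4 / γ + 1) - 1) / 2)
        ≤ p * (#W * (μ * n)) * ((Real.exp (4 / γ + 1) - 1) / 2) := by
          gcongr
          exact htop.trans (by gcongr)
      _ = n * p * #W * ((μ * Real.exp (4 / γ + 1) - μ) / 2) := by ring
      _ ≤ n * p * #W * (γ / 2) := by
          have hμ0 : 0 < μ := pos_of_mul_pos_left (by linarith) n.cast_nonneg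
          gcongr
          linarith
  refine (gnpProb_le_adjPairs hp (l := 2 / γ + 1 / 2) (by positivity) fun G hG => hG.le).trans ?_
  rw [← Real.exp_nat_mul, ← Real.exp_add, Real.exp_le_exp, hl]
  calc _ ≤ n * p * #W * (γ / 2) - (2 / γ + 1 / 2) * γ * (n * p * #W) := by linarith
    _ ≤ #W * -(n * p) + -(n * p) := by
      rw [hlγ]
      linarith [mul_le_mul_of_nonneg_left hW1 (mul_nonneg (Nat.cast_nonneg n) hp0)]

theorem sum_exp_neg_pow_card_le {n : ℕ} {d : ℝ} (hd : n ≤ Real.exp d) :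
    ∑ W : Finset (Fin n), Real.exp (-d) ^ #W ≤ Real.exp 1 := by
  calc ∑ W : Finset (Fin n), Real.exp (-d) ^ #W = (Real.exp (-d) + 1) ^ n := by
        simpa using Fintype.sum_pow_mul_eq_add_pow (Fin n) (Real.exp (-d)) 1
    _ ≤ Real.exp (Real.exp (-d)) ^ n := by
        gcongr
        exact Real.add_one_le_exp _
    _ ≤ Real.exp 1 := by
        rw [← Real.exp_nat_mul, Real.exp_le_exp, Real.exp_neg]
        exact mul_inv_le_one_of_le₀ hd (Real.exp_pos d).le

theorem exists_whp_eBetween_self_le {p : ℕ → ℝ} (hp : ∀ n, p n ∈ unitInterval)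
    (hd : Tendsto (fun n => n * p n) atTop atTop)
    (hexp : ∀ᶠ n : ℕ in atTop, n ≤ Real.exp (n * p n)) {γ : ℝ} (hγ : 0 < γ) :
    ∃ μ > 0, WHP p fun n G => ∀ W : Finset (Fin n), (#W : ℝ) ≤ μ * n →
      (eBetween G W W : ℝ) ≤ γ * (n * p n) * #W := by
  set μ : ℝ := γ / Real.exp (4 / γ + 1)
  have hμ : μ * Real.exp (4 / γ + 1) ≤ γ := by rw [div_mul_cancel₀ _ (Real.exp_pos _).ne']
  refine ⟨μ, by positivity, .of_gnpProb_not_le hp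
    (b := fun n => Real.exp 1 * Real.exp (-(n * p n))) ?_ ?_⟩
  · simpa using (Real.tendsto_exp_neg_atTop_nhds_zero.comp hd).const_mul (Real.exp 1)
  filter_upwards [hexp] with n hn
  calc gnpProb n (p n) _
      ≤ ∑ W ∈ {W : Finset (Fin n) | W.Nonempty ∧ (#W : ℝ) ≤ μ * n},
          gnpProb n (p n) (fun G => γ * (n * p n) * #W < eBetween G W W) := by
        refine gnpProb_le_sum (hp n) fun G hG => ?_
        push Not at hG
        obtain ⟨W, hWμ, hlt⟩ := hG
        have hW : W.Nonempty := by
          rw [nonempty_iff_ne_empty]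
          rintro rfl
          simp [eBetween] at hlt
        exact ⟨W, mem_filter.2 ⟨mem_univ _, hW, hWμ⟩, hlt⟩
    _ ≤ ∑ W ∈ {W : Finset (Fin n) | W.Nonempty ∧ (#W : ℝ) ≤ μ * n},
          Real.exp (-(n * p n)) ^ #W * Real.exp (-(n * p n)) := by
        refine sum_le_sum fun W hW => ?_
        obtain ⟨hW, hWμ⟩ := (mem_filter.1 hW).2
        exact gnpProb_lt_eBetween_self_le (hp n) hγ hμ hW hWμ
    _ ≤ (∑ W : Finset (Fin n), Real.exp (-(n * p n)) ^ #W) * Real.exp (-(n * p n)) := by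
        rw [← sum_mul]
        gcongr
        exact subset_univ _
    _ ≤ Real.exp 1 * Real.exp (-(n * p n)) := by
        gcongr
        exact sum_exp_neg_pow_card_le hn

end LocalSparsity

section VertexSequences

variable {V : Type*} {k r : ℕ}

/-- The set of edges traversed by a sequence `f` of vertices; it has `k` elements when no edge is
traversed twice. -/
noncomputable def seqEdges (f : Fin (k + 1) → V) : Finset (Sym2 V) :=
  univ.image fun i : Fin k => s(f i.castSucc, f i.succ)

theorem exists_seqEdges_eq {G : SimpleGraph V} {u v : V} {q : G.Walk u v} (hq : q.IsTrail) :
    ∃ f : Fin (q.length + 1) → V, f 0 = u ∧ f (Fin.last _) = v ∧ #(seqEdges f) = q.length ∧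
      ∀ e ∈ seqEdges f, e ∈ G.edgeSet := by
  refine ⟨fun i => q.getVert i, q.getVert_zero, q.getVert_length, ?_, fun e he => ?_⟩
  · have hinj : Function.Injective fun i : Fin q.length => s(q.getVert i, q.getVert (i + 1)) := by
      intro i j hij
      have hi : (i : ℕ) < q.edges.length := q.length_edges.symm ▸ i.2
      have hj : (j : ℕ) < q.edges.length := q.length_edges.symm ▸ j.2
      refine Fin.ext ((hq.edges_nodup.getElem_inj_iff (hi := hi) (hj := hj)).1 ?_)
      simpa only [Walk.getElem_edges] using hij
    exact (card_image_of_injective _ hinj).trans (Fintype.card_fin _)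
  · obtain ⟨i, -, rfl⟩ := mem_image.1 he
    exact q.adj_getVert_succ i.2

theorem isSeparated_of_forall_seqEdges {G : SimpleGraph V} {D : Finset V}
    (h : ∀ k ∈ Icc 1 r, ∀ f : Fin (k + 1) → V, f 0 ∈ D → f (Fin.last k) ∈ D → #(seqEdges f) = k →
      ¬ ∀ e ∈ seqEdges f, e ∈ G.edgeSet) : IsSeparated G D r := by
  have hwalk : ∀ u ∈ D, ∀ v ∈ D, ∀ q : G.Walk u v, q.IsTrail → 0 < q.length → r < q.length := by
    intro u hu v hv q hq hpos
    by_contra! hqr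
    obtain ⟨f, h0, hlast, hcard, hf⟩ := exists_seqEdges_eq hq
    exact h _ (mem_Icc.2 ⟨hpos, hqr⟩) f (h0.symm ▸ hu) (hlast.symm ▸ hv) hcard hf
  refine ⟨fun u hu v hv q hq => hwalk u hu v hv q hq.isTrail, fun u hu q hq => ?_⟩
  exact hwalk u hu u hu q hq.isTrail (by have := hq.three_le_length; lia)

theorem card_filter_eq_last_le [Fintype V] [DecidableEq V] (hk : 0 < k) :
    #{f : Fin (k + 1) → V | f 0 = f (Fin.last k)} ≤ Fintype.card V ^ k := by
  obtain ⟨k, rfl⟩ := Nat.exists_eq_add_one_of_ne_zero hk.ne'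
  refine (card_le_card_of_injOn Fin.tail (t := univ) (fun f _ => mem_univ _) ?_).trans_eq (by simp)
  intro f hf g hg hfg
  have hf : f 0 = Fin.tail f (Fin.last k) := (mem_filter.1 hf).2
  have hg : g 0 = Fin.tail g (Fin.last k) := (mem_filter.1 hg).2
  rw [← Fin.cons_self_tail f, ← Fin.cons_self_tail g, hf, hg, hfg]

end VertexSequences

section LowDegree

variable {n k : ℕ} {p : ℝ}

theorem pairMult_product_compl_le_one {V : Type*} [Fintype V] [DecidableEq V] {R W : Finset V}
    (h : R ⊆ W) (e : Sym2 V) : pairMult (R ×ˢ Wᶜ) e ≤ 1 := by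
  refine card_le_one.2 fun q hq q' hq' => ?_
  simp only [mem_filter, mem_product, mem_compl] at hq hq'
  rcases Sym2.eq_iff.1 (hq.2.trans hq'.2.symm) with ⟨h1, h2⟩ | ⟨h1, -⟩
  · exact Prod.ext h1 h2
  · exact absurd (h1 ▸ h hq.1.1) hq'.1.2

theorem exp_neg_two_le : Real.exp (-2) ≤ 0.14 := by
  have hexp : (7.2 : ℝ) ≤ Real.exp 2 := by
    rw [← one_add_one_eq_two, Real.exp_add]
    linarith [mul_le_mul Real.exp_one_gt_d9.le Real.exp_one_gt_d9.le (by norm_num)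
      (Real.exp_pos 1).le]
  rw [Real.exp_neg]
  exact (inv_anti₀ (by norm_num) hexp).trans (by norm_num)

theorem exponent_low_degree_le {r w : ℝ} (hp : p ∈ unitInterval) (hr : 0 ≤ r) (hw : 0 ≤ w)
    (hwd : 22 * w ≤ n * p) :
    2 * (r * (n * p / 100)) - p * (1 - Real.exp (-2)) * (r * (n - w)) ≤ -(0.8 * r * (n * p)) := by
  have hpw : 21 / 22 * (n * p) ≤ p * (n - w) := by
    linarith [mul_le_mul_of_nonneg_right hp.2 hw]
  have hexp : 0.86 * (21 / 22 * (n * p)) ≤ (1 - Real.exp (-2)) * (p * (n - w)) :=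
    mul_le_mul (by linarith [exp_neg_two_le]) hpw (by linarith) (by linarith [exp_neg_two_le])
  linarith [mul_le_mul_of_nonneg_left hexp hr, mul_nonneg hr (by linarith : 0 ≤ n * p)]

theorem gnpProb_subset_lowDegSet_le (hp : p ∈ unitInterval) {R W : Finset (Fin n)} (hRW : R ⊆ W)
    {T : Finset (Sym2 (Fin n))} (hTW : ∀ e ∈ T, ∀ v ∈ e, v ∈ W) (hW : 22 * #W ≤ n * p) :
    gnpProb n p (fun G => T ⊆ G.edgeFinset ∧ R ⊆ lowDegSet n (n * p / 100) G) ≤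
      p ^ #T * Real.exp (-(0.8 * #R * (n * p))) := by
  have hST : ∀ q ∈ R ×ˢ Wᶜ, s(q.1, q.2) ∉ T := fun q hq hqT =>
    mem_compl.1 (mem_product.1 hq).2 (hTW _ hqT q.2 (Sym2.mem_mk_right _ _))
  have hlow (G : SimpleGraph (Fin n)) (hR : R ⊆ lowDegSet n (n * p / 100) G) :
      (#(adjPairs G (R ×ˢ Wᶜ)) : ℝ) ≤ #R * (n * p / 100) :=
    calc (#(adjPairs G (R ×ˢ Wᶜ)) : ℝ) ≤ #(adjPairs G (R ×ˢ univ)) := by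
          gcongr
          exact adjPairs_mono le_rfl (product_subset_product_right (subset_univ _))
      _ = ∑ v ∈ R, (G.degree v : ℝ) := by rw [card_adjPairs_product_univ, Nat.cast_sum]
      _ ≤ #R * (n * p / 100) := by
          rw [← nsmul_eq_mul]
          exact sum_le_card_nsmul _ _ _ fun v hv => (mem_filter.1 (hR hv)).2.le
  have htop : (#(adjPairs ⊤ (R ×ˢ Wᶜ)) : ℝ) = #R * (n - #W) := by
    have h := card_adjPairs_top_product_add R Wᶜ
    rw [disjoint_iff_inter_eq_empty.1 (disjoint_compl_right.mono_left hRW), card_empty,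
      add_zero] at h
    rw [h, Nat.cast_mul, card_compl, Nat.cast_sub (card_le_univ W), Fintype.card_fin]
  refine (gnpProb_adjPairs_le hp hST (k := 1) Nat.one_pos (pairMult_product_compl_le_one hRW)
    (l := 2) (a := #R * (n * p / 100)) fun G hG =>
      ⟨hG.1, mul_le_mul_of_nonneg_left (hlow G hG.2) zero_le_two⟩).trans ?_
  rw [htop, Nat.cast_one, mul_one, div_one]
  refine mul_le_mul_of_nonneg_left (Real.exp_le_exp.2 ?_) (pow_nonneg hp.1 _)
  exact exponent_low_degree_le hp (Nat.cast_nonneg _) (Nat.cast_nonneg _) hW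

theorem sum_exp_neg_card_ends_le {d : ℝ} (hk : 0 < k) (hd : n ≤ Real.exp d) (hd0 : 0 ≤ d) :
    ∑ f : Fin (k + 1) → Fin n, Real.exp (-(0.8 * #{f 0, f (Fin.last k)} * d)) ≤
      2 * (n ^ k * Real.exp (-(0.6 * d))) := by
  have hterm : ∀ f : Fin (k + 1) → Fin n, Real.exp (-(0.8 * #{f 0, f (Fin.last k)} * d)) ≤
      (if f 0 = f (Fin.last k) then Real.exp (-(0.6 * d)) else 0) + Real.exp (-(1.6 * d)) := by
    intro f
    split_ifs with h
    · rw [h, pair_eq_singleton, card_singleton, Nat.cast_one]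
      refine le_add_of_le_of_nonneg ?_ (Real.exp_pos _).le
      gcongr
      norm_num
    · rw [card_pair h, zero_add, Nat.cast_two]
      norm_num
  calc _ ≤ ∑ f : Fin (k + 1) → Fin n,
        ((if f 0 = f (Fin.last k) then Real.exp (-(0.6 * d)) else 0) + Real.exp (-(1.6 * d))) :=
        sum_le_sum fun f _ => hterm f
    _ = #{f : Fin (k + 1) → Fin n | f 0 = f (Fin.last k)} * Real.exp (-(0.6 * d)) +
        n ^ (k + 1) * Real.exp (-(1.6 * d)) := by
        rw [sum_add_distrib, ← sum_filter, sum_const, sum_const, nsmul_eq_mul, nsmul_eq_mul,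
          card_univ, Fintype.card_fun, Fintype.card_fin, Fintype.card_fin, Nat.cast_pow]
    _ ≤ n ^ k * Real.exp (-(0.6 * d)) + n ^ k * (Real.exp d * Real.exp (-(1.6 * d))) := by
        rw [pow_succ, mul_assoc]
        gcongr
        have h := card_filter_eq_last_le (V := Fin n) hk
        rw [Fintype.card_fin] at h
        exact_mod_cast h
    _ = 2 * (n ^ k * Real.exp (-(0.6 * d))) := by
        rw [← Real.exp_add]
        ring_nf

theorem gnpProb_exists_seqEdges_le (hp : p ∈ unitInterval) (hk : 0 < k)
    (hkd : 22 * (k + 1) ≤ n * p) (hexp : n ≤ Real.exp (n * p)) :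
    gnpProb n p (fun G => ∃ f : Fin (k + 1) → Fin n, #(seqEdges f) = k ∧
      seqEdges f ⊆ G.edgeFinset ∧ {f 0, f (Fin.last k)} ⊆ lowDegSet n (n * p / 100) G) ≤
      2 * ((n * p) ^ k * Real.exp (-(0.6 * (n * p)))) := by
  have hp0 := hp.1
  calc gnpProb n p _
      ≤ ∑ f ∈ {f : Fin (k + 1) → Fin n | #(seqEdges f) = k}, gnpProb n p (fun G =>
          seqEdges f ⊆ G.edgeFinset ∧ {f 0, f (Fin.last k)} ⊆ lowDegSet n (n * p / 100) G) :=
        gnpProb_le_sum hp fun G ⟨f, hf, hG⟩ => ⟨f, mem_filter.2 ⟨mem_univ _, hf⟩, hG⟩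
    _ ≤ ∑ f ∈ {f : Fin (k + 1) → Fin n | #(seqEdges f) = k},
          p ^ k * Real.exp (-(0.8 * #{f 0, f (Fin.last k)} * (n * p))) := by
        refine sum_le_sum fun f hf => ?_
        have hW : (#(univ.image f) : ℝ) ≤ k + 1 := by
          exact_mod_cast card_image_le.trans_eq (by simp)
        have h := gnpProb_subset_lowDegSet_le hp (R := {f 0, f (Fin.last k)}) (T := seqEdges f)
          (W := univ.image f) (by simp [insert_subset_iff]) (by simp [seqEdges]) (by linarith)
        rwa [(mem_filter.1 hf).2] at h
    _ ≤ p ^ k * ∑ f : Fin (k + 1) → Fin n,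
          Real.exp (-(0.8 * #{f 0, f (Fin.last k)} * (n * p))) := by
        rw [← mul_sum]
        gcongr
        exact subset_univ _
    _ ≤ p ^ k * (2 * (n ^ k * Real.exp (-(0.6 * (n * p))))) := by
        gcongr
        exact sum_exp_neg_card_ends_le hk hexp (by positivity)
    _ = 2 * ((n * p) ^ k * Real.exp (-(0.6 * (n * p)))) := by ring

theorem tendsto_pow_mul_exp_neg_mul_atTop (k : ℕ) {c : ℝ} (hc : 0 < c) :
    Tendsto (fun x : ℝ => x ^ k * Real.exp (-(c * x))) atTop (nhds 0) := by
  have h := ((Real.tendsto_pow_mul_exp_neg_atTop_nhds_zero k).comp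
    (tendsto_id.const_mul_atTop hc)).const_mul (c⁻¹ ^ k)
  rw [mul_zero] at h
  refine h.congr fun x => ?_
  rw [Function.comp_apply, id, ← mul_assoc, ← mul_pow, inv_mul_cancel_left₀ hc.ne']

theorem whp_isSeparated_lowDegSet {p : ℕ → ℝ} (hp : ∀ n, p n ∈ unitInterval)
    (hd : Tendsto (fun n => n * p n) atTop atTop)
    (hexp : ∀ᶠ n : ℕ in atTop, n ≤ Real.exp (n * p n)) (r : ℕ) :
    WHP p fun n G => IsSeparated G (lowDegSet n (n * p n / 100) G) r := by
  have hk : ∀ k ∈ Icc 1 r, WHP p fun n G => ¬ ∃ f : Fin (k + 1) → Fin n, #(seqEdges f) = k ∧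
      seqEdges f ⊆ G.edgeFinset ∧ {f 0, f (Fin.last k)} ⊆ lowDegSet n (n * p n / 100) G := by
    intro k hk
    refine .of_gnpProb_not_le hp
      (b := fun n => 2 * ((n * p n) ^ k * Real.exp (-(0.6 * (n * p n))))) ?_ ?_
    · simpa using ((tendsto_pow_mul_exp_neg_mul_atTop k (by norm_num : (0 : ℝ) < 0.6)).comp
        hd).const_mul 2
    · filter_upwards [hexp, hd.eventually_ge_atTop (22 * (k + 1))] with n hn hkd
      simpa only [not_not] using gnpProb_exists_seqEdges_le (hp n) (mem_Icc.1 hk).1 hkd hn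
  refine (WHP.forall_mem hp hk).mono hp (Eventually.of_forall fun n G hG => ?_)
  refine isSeparated_of_forall_seqEdges fun k hk f h0 hlast hcard hf => hG k hk ⟨f, hcard, ?_, ?_⟩
  · exact fun e he => mem_edgeFinset.2 (hf e he)
  · exact insert_subset h0 (singleton_subset_iff.2 hlast)

end LowDegree

section Resilience

variable {ε : ℝ} {p : ℕ → ℝ}

theorem exists_whp_isTypical (hp : ∀ n, p n ∈ unitInterval)
    (hd : Tendsto (fun n => n * p n) atTop atTop)
    (hexp : ∀ᶠ n : ℕ in atTop, n ≤ Real.exp (n * p n)) (hε : 0 < ε) (hε3 : ε ≤ 1 / 3) :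
    ∃ β > 0, ∃ θ > 0, β ≤ ε / 16 ∧ θ ≤ 1 / 150 ∧ WHP p fun n G =>
      IsTypical G (lowDegSet n (n * p n / 100) G) (p n) ε β (θ / 16 * (n * p n))
        ⌊θ * (n * p n * n)⌋₊ := by
  obtain ⟨θ', hθ', hpairs⟩ := exists_whp_forall_sparse hp hd (by positivity : 0 < ε / 8)
    (by linarith) (by norm_num : (0 : ℝ) < 1 / 20)
  obtain ⟨θ, hθ0, hθθ', hθ⟩ : ∃ θ > 0, θ ≤ θ' ∧ θ ≤ 1 / 150 :=
    ⟨min θ' (1 / 150), by positivity, min_le_left _ _, min_le_right _ _⟩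
  obtain ⟨μ, hμ, hsparse⟩ := exists_whp_eBetween_self_le hp hd hexp (by positivity : 0 < θ / 16)
  obtain ⟨β, hβ0, hβε, hβμ⟩ : ∃ β > 0, β ≤ ε / 16 ∧ β ≤ μ / 6 :=
    ⟨min (ε / 16) (μ / 6), by positivity, min_le_left _ _, min_le_right _ _⟩
  have hεβ : ε * β ≤ 1 / 3 := (mul_le_of_le_one_right hε.le (by linarith)).trans hε3
  refine ⟨β, hβ0, θ, hθ0, hβε, hθ, ?_⟩
  have hdeg := whp_sum_degree_le hp hd (by positivity : 0 < ε / 8) (by linarith) hβ0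
  have hjoin := whp_eBetween_ge hp hd (by positivity : 0 < ε / 8) (by linarith) (mul_pos hε hβ0)
  have hpairs := hpairs (fun _ => closingPairs) fun n Γ q hq =>
    ⟨(mem_closingPairs.1 hq).1, (mem_closingPairs.1 hq).2.1⟩
  have hsep := whp_isSeparated_lowDegSet hp hd hexp 4
  refine ((((hdeg.and hp hjoin).and hp hpairs).and hp hsparse).and hp hsep).mono hp
    (Eventually.of_forall fun n G ⟨⟨⟨⟨hdeg, hjoin⟩, hpairs⟩, hsparse⟩, hsep⟩ => ?_)
  have hp0 := (hp n).1
  refine ⟨fun v => by simp [lowDegSet], ?_, fun U Z hU hZ => ?_, fun Γ hΓ hM hc => ?_,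
    fun W hW => ?_, hsep⟩
  · simpa only [Fintype.card_fin] using hdeg
  · rw [Fintype.card_fin] at hU hZ
    exact hjoin U Z hU (by linarith [mul_le_mul_of_nonneg_right hεβ n.cast_nonneg'])
  · rw [Fintype.card_fin] at hc
    refine hpairs Γ hΓ ?_ (by linarith)
    exact ((Nat.le_floor_iff (by positivity)).1 hM).trans (by gcongr)
  · rw [Fintype.card_fin] at hW
    exact hsparse W (hW.trans (by gcongr; linarith))

theorem exists_skeleton_parameters {n : ℕ} {d θ κ : ℝ} (hn : 1 ≤ n) (hκ : 0 < κ)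
    (hθ : 0 < θ) (hθ1 : θ ≤ 1 / 150) (hd : 300 ≤ d) (hθd : 2 * (16 / κ + 3) ≤ θ * d) :
    ∃ k t : ℕ, 2 ≤ k ∧ 6 * (θ / 16 * d) < k ∧ k ≤ d / 150 ∧ 16 * n ≤ κ * t ∧
      n * k + t + n ≤ ⌊θ * (d * n)⌋₊ := by
  have hκ16 : 0 < 16 / κ := by positivity
  have hk : θ * d / 2 ≤ ⌈θ * d / 2⌉₊ := Nat.le_ceil _
  have hk1 : ⌈θ * d / 2⌉₊ < θ * d / 2 + 1 := Nat.ceil_lt_add_one (by positivity)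
  have ht : 16 / κ * n ≤ ⌈16 / κ * n⌉₊ := Nat.le_ceil _
  have ht1 : ⌈16 / κ * n⌉₊ < 16 / κ * n + 1 := Nat.ceil_lt_add_one (by positivity)
  have hn1 : (1 : ℝ) ≤ n := by exact_mod_cast hn
  refine ⟨⌈θ * d / 2⌉₊, ⌈16 / κ * n⌉₊, ?_, ?_, ?_, ?_, Nat.le_floor ?_⟩
  · exact_mod_cast (by linarith : (2 : ℝ) ≤ ⌈θ * d / 2⌉₊)
  · linarith [mul_pos hθ (by linarith : 0 < d)]
  · linarith [mul_le_mul_of_nonneg_right hθ1 (by linarith : 0 ≤ d)]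
  · calc 16 * (n : ℝ) = κ * (16 / κ * n) := by field_simp
      _ ≤ κ * ⌈16 / κ * n⌉₊ := by gcongr
  · push_cast
    nlinarith [mul_le_mul_of_nonneg_left hθd n.cast_nonneg']

theorem IsAdmissible.mono {V : Type*} [Fintype V] {G H : SimpleGraph V} {D : Finset V} {ε' : ℝ}
    (hH : IsAdmissible G H D ε) (hε : ε' ≤ ε) : IsAdmissible G H D ε' where
  low := hH.low
  high v hv := (hH.high v hv).trans (by gcongr)

theorem eventually_log_le_mul {p : ℕ → ℝ} (hp : Tendsto (fun n : ℕ =>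
    n * p n - Real.log n - Real.log (Real.log n)) atTop atTop) :
    ∀ᶠ n : ℕ in atTop, Real.log n ≤ n * p n := by
  filter_upwards [hp.eventually_ge_atTop 0, (Real.tendsto_log_atTop.comp
    tendsto_natCast_atTop_atTop).eventually_ge_atTop 1] with n hn hlog
  have hloglog := Real.log_nonneg hlog
  rw [Function.comp_apply] at hloglog
  linarith

theorem isAdmissible_lowDegSet {n : ℕ} {G H : SimpleGraph (Fin n)} {t : ℝ}
    (h : ∀ v, ((G.degree v : ℝ) < t → (H.degree v : ℝ) ≤ G.degree v - 2) ∧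
      (t ≤ G.degree v → (H.degree v : ℝ) ≤ (1 / 3 - ε) * G.degree v)) :
    IsAdmissible G H (lowDegSet n t G) ε where
  low v hv := (h v).1 (mem_filter.1 hv).2
  high v hv := (h v).2 <| not_lt.1 fun hlt => hv <| mem_filter.2 ⟨mem_univ _, hlt⟩

theorem stmt0_general (hε : 0 < ε) (hp : ∀ n, p n ∈ unitInterval)
    (hlog : ∀ᶠ n : ℕ in atTop, Real.log n ≤ n * p n) :
    WHP p fun n G => ∀ H : SimpleGraph (Fin n),
      IsAdmissible G H (lowDegSet n (n * p n / 100) G) ε → (G \ H).IsHamiltonian := by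
  wlog hε3 : ε ≤ 1 / 3 generalizing ε
  · exact (this (by norm_num) le_rfl).mono hp <| Eventually.of_forall fun n G hG H hH =>
      hG H (hH.mono (le_of_not_ge hε3))
  have hn := tendsto_natCast_atTop_atTop (R := ℝ)
  have hd : Tendsto (fun n : ℕ => n * p n) atTop atTop :=
    tendsto_atTop_mono' _ hlog (Real.tendsto_log_atTop.comp hn)
  have hexp : ∀ᶠ n : ℕ in atTop, n ≤ Real.exp (n * p n) := by
    filter_upwards [hlog, eventually_ge_atTop 1] with n hlog hn
    exact (Real.log_le_iff_le_exp (by exact_mod_cast hn)).1 hlog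
  obtain ⟨β, hβ, θ, hθ, hβε, hθ1, htyp⟩ := exists_whp_isTypical hp hd hexp hε hε3
  refine htyp.mono hp ?_
  filter_upwards [eventually_ge_atTop 1, (hn.const_mul_atTop hβ).eventually_ge_atTop 1,
    hd.eventually_ge_atTop 300, (hd.const_mul_atTop hθ).eventually_ge_atTop _]
    with n hn hβn hd hθd G hG H hH
  obtain ⟨k, t, hk, hkc, hkp, ht, hM⟩ :=
    exists_skeleton_parameters hn (mul_pos hε hβ) hθ hθ1 hd hθd
  have hp0 : 0 < p n := pos_of_mul_pos_right (by linarith) n.cast_nonneg'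
  exact hG.isHamiltonian hH sdiff_le le_sdiff_sup hp0 hε hε3 hβ hβε (by rwa [Fintype.card_fin])
    (by positivity) hk hkc (by rwa [Fintype.card_fin]) (by rwa [Fintype.card_fin])
    (by rwa [Fintype.card_fin])

end Resilience

/-- Theorem 1 (main theorem): w.h.p. `G ~ G(n,p)` is `d̃(np/100, ε)`-resilient with
respect to Hamiltonicity. -/
theorem stmt0 (ε : ℝ) (hε : 0 < ε) (p : ℕ → ℝ)
    (hp0 : ∀ n, 0 ≤ p n) (hp1 : ∀ n, p n ≤ 1)
    (hp : Tendsto (fun n : ℕ => n * p n - Real.log n - Real.log (Real.log n)) atTop atTop) :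
    WHP p (fun n G =>
      ∀ H : SimpleGraph (Fin n), H ≤ G →
        (∀ v : Fin n,
          ((G.degree v : ℝ) < n * p n / 100 → (H.degree v : ℝ) ≤ (G.degree v : ℝ) - 2) ∧
          ((n : ℝ) * p n / 100 ≤ (G.degree v : ℝ) →
            (H.degree v : ℝ) ≤ (1 / 3 - ε) * (G.degree v : ℝ))) →
        (G \ H).IsHamiltonian) := by
  have hp' n : p n ∈ unitInterval := ⟨hp0 n, hp1 n⟩
  exact (stmt0_general hε hp' (eventually_log_le_mul hp)).mono hp' <|
    Eventually.of_forall fun n G hG H _ hH => hG H (isAdmissible_lowDegSet hH)
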